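/- arXiv:0810.2727 — 14 statements merged into one kernel-verified Lean document; each statement's English description precedes it below -/
import Mathlib

section
/- Let ℓ ≥ 1 and let k, m, n be integers with 0 ≤ k ≤ m ≤ n. Then the entry g_{ℓ,n}^m of Euler's difference table equals the number of colored permutations π ∈ G_{ℓ,n} all of whose k-circular successions lie in [m], i.e., g_{ℓ,n}^m = #{π ∈ G_{ℓ,n} : C^k(π) ⊆ {1,…,m}}. -/
/-- A colored permutation in `G_{ℓ,n} = C_ℓ ≀ S_n`: a pair `(ε, σ)` where
`ε : [n] → Z/ℓZ` assigns colors and `σ` is a permutation of `[n]`.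
We model `[n] = {1,…,n}` by `Fin n`, where `i : Fin n` represents the integer `i + 1`. -/
abbrev ColoredPerm (ℓ n : ℕ) := (Fin n → ZMod ℓ) × Equiv.Perm (Fin n)

/-- Predicate: all `k`-circular successions have value `< m`. -/
def Good (ℓ k m n : ℕ) (π : ColoredPerm ℓ n) : Prop :=
  ∀ i : Fin n, ((π.2 i : ℕ) = (i : ℕ) + k ∧ π.1 (π.2 i) = 0) → (π.2 i : ℕ) < m

/-- Insert the value `q` at position `p` in a permutation. -/
def insPerm {n : ℕ} (p q : Fin (n + 1)) (τ : Equiv.Perm (Fin n)) : Equiv.Perm (Fin (n + 1)) :=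
  ((finSuccEquiv' p).trans (Equiv.optionCongr τ)).trans (finSuccEquiv' q).symm

lemma insPerm_self {n : ℕ} (p q : Fin (n + 1)) (τ : Equiv.Perm (Fin n)) :
    insPerm p q τ p = q := by
  simp [insPerm]

lemma insPerm_succAbove {n : ℕ} (p q : Fin (n + 1)) (τ : Equiv.Perm (Fin n)) (i : Fin n) :
    insPerm p q τ (p.succAbove i) = q.succAbove (τ i) := by
  simp [insPerm]

lemma insPerm_injective {n : ℕ} (p q : Fin (n + 1)) : Function.Injective (insPerm p q) := by
  intro a b h
  ext i
  have := congrArg (fun e : Equiv.Perm (Fin (n + 1)) => e (p.succAbove i)) h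
  simp only [insPerm_succAbove] at this
  rw [Fin.succAbove_right_injective this]

lemma insPerm_surj {n : ℕ} (p q : Fin (n + 1)) (σ : Equiv.Perm (Fin (n + 1))) (h : σ p = q) :
    ∃ τ, insPerm p q τ = σ := by
  have hne : ∀ i, ∃ j, q.succAbove j = σ (p.succAbove i) := by
    intro i
    apply Fin.exists_succAbove_eq
    rw [← h]
    intro h'
    exact Fin.succAbove_ne p i (σ.injective h')
  choose f hf using hne
  have hinj : Function.Injective f := by
    intro a b hab
    have : σ (p.succAbove a) = σ (p.succAbove b) := by rw [← hf, ← hf, hab]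
    exact Fin.succAbove_right_injective (σ.injective this)
  refine ⟨Equiv.ofBijective f (Finite.injective_iff_bijective.mp hinj), ?_⟩
  apply Equiv.ext
  rw [Fin.forall_iff_succAbove p]
  refine ⟨by rw [insPerm_self, h], fun i => ?_⟩
  rw [insPerm_succAbove, ← hf]
  rfl

/-- Insert an uncolored value `q` at position `p`. -/
def insC {ℓ n : ℕ} (p q : Fin (n + 1)) (π : ColoredPerm ℓ n) : ColoredPerm ℓ (n + 1) :=
  (Fin.insertNth (α := fun _ => ZMod ℓ) q 0 π.1, insPerm p q π.2)

lemma insC_injective {ℓ n : ℕ} (p q : Fin (n + 1)) :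
    Function.Injective (insC (ℓ := ℓ) p q) := by
  rintro ⟨a, s⟩ ⟨b, t⟩ h
  simp only [insC, Prod.mk.injEq] at h
  obtain ⟨h1, h2⟩ := h
  rw [insPerm_injective p q h2]
  congr 1
  funext i
  simpa using congrFun h1 (q.succAbove i)

lemma insC_surj {ℓ n : ℕ} (p q : Fin (n + 1)) (π : ColoredPerm ℓ (n + 1))
    (h : π.2 p = q) (h0 : π.1 q = 0) : ∃ ρ, insC p q ρ = π := by
  obtain ⟨a, s⟩ := π
  obtain ⟨t, ht⟩ := insPerm_surj p q s h
  refine ⟨(fun i => a (q.succAbove i), t), ?_⟩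
  simp only [insC, ht, Prod.mk.injEq, and_true]
  funext i
  revert i
  rw [Fin.forall_iff_succAbove q]
  refine ⟨?_, fun i => ?_⟩
  · simpa using h0.symm
  · simp

lemma val_succAbove {n : ℕ} (p : Fin (n + 1)) (i : Fin n) :
    (p.succAbove i : ℕ) = if (i : ℕ) < p then (i : ℕ) else i + 1 := by
  simp only [Fin.succAbove, Fin.lt_def, Fin.val_castSucc]
  split_ifs <;> simp

lemma good_insC {ℓ n k m : ℕ} (hk : k ≤ m) (p q : Fin (n + 1)) (hp : (p : ℕ) = m - k)
    (hq : (q : ℕ) = m) (π : ColoredPerm ℓ n) :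
    Good ℓ k (m + 1) (n + 1) (insC p q π) ↔ Good ℓ k m n π := by
  unfold Good
  rw [Fin.forall_iff_succAbove p]
  simp only [insC, insPerm_self, insPerm_succAbove, Fin.insertNth_apply_same,
    Fin.insertNth_apply_succAbove, val_succAbove, hp, hq]
  constructor
  · rintro ⟨-, h⟩ i ⟨h1, h2⟩
    have := h i
    simp only [h2, and_true] at this
    split_ifs at this <;> omega
  · intro h
    refine ⟨fun _ => by omega, ?_⟩
    rintro i ⟨h1, h2⟩
    have := h i
    simp only [h2, and_true] at this
    split_ifs at h1 ⊢ <;> omega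

lemma card_rec {ℓ n k m : ℕ} (hℓ : 1 ≤ ℓ) (hk : k ≤ m) (hm : m ≤ n) :
    {π | Good ℓ k (m + 1) (n + 1) π}.ncard =
      {π | Good ℓ k m (n + 1) π}.ncard + {π | Good ℓ k m n π}.ncard := by
  have : NeZero ℓ := ⟨by omega⟩
  obtain ⟨p, hp⟩ : ∃ p : Fin (n + 1), (p : ℕ) = m - k := ⟨⟨m - k, by omega⟩, rfl⟩
  obtain ⟨q, hq⟩ : ∃ q : Fin (n + 1), (q : ℕ) = m := ⟨⟨m, by omega⟩, rfl⟩
  rw [← Set.ncard_image_of_injective {π | Good ℓ k m n π} (insC_injective p q),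
    ← Set.ncard_union_eq]
  · congr 1
    ext π
    simp only [Set.mem_ofPred_eq, Set.mem_union, Set.mem_image]
    constructor
    · intro h
      by_cases hc : π.2 p = q ∧ π.1 q = 0
      · right
        obtain ⟨ρ, rfl⟩ := insC_surj p q π hc.1 hc.2
        exact ⟨ρ, (good_insC hk p q hp hq ρ).1 h, rfl⟩
      · left
        rintro i ⟨h1, h2⟩
        have h3 := h i ⟨h1, h2⟩
        by_contra h4
        have h5 : π.2 i = q := Fin.ext (by omega)
        have h6 : i = p := Fin.ext (by omega)
        subst h6
        exact hc ⟨h5, h5 ▸ h2⟩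
    · rintro (h | ⟨ρ, h, rfl⟩)
      · intro i hi
        have := h i hi
        omega
      · exact (good_insC hk p q hp hq ρ).2 h
  · rw [Set.disjoint_left]
    rintro _ h ⟨ρ, -, rfl⟩
    have := (show Good ℓ k m (n + 1) (insC p q ρ) from h) p
    simp only [insC, insPerm_self, Fin.insertNth_apply_same, hp, hq, and_true] at this
    omega

lemma card_diag {ℓ k : ℕ} (hℓ : 1 ≤ ℓ) (n : ℕ) :
    {π | Good ℓ k n n π}.ncard = ℓ ^ n * n.factorial := by
  have : NeZero ℓ := ⟨by omega⟩
  have : {π | Good ℓ k n n π} = Set.univ :=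
    Set.eq_univ_of_forall fun π i _ => (π.2 i).isLt
  rw [this, Set.ncard_univ, Nat.card_eq_fintype_card]
  simp [Fintype.card_perm, ZMod.card]

lemma main_aux (ℓ : ℕ) (hℓ : 1 ≤ ℓ) (g : ℕ → ℕ → ℤ)
    (hg_diag : ∀ n : ℕ, g n n = (ℓ : ℤ) ^ n * (Nat.factorial n : ℤ))
    (hg_rec : ∀ n m : ℕ, m < n → g n m = g n (m + 1) - g (n - 1) m)
    (k d : ℕ) : ∀ m : ℕ, k ≤ m →
    g (m + d) m = ({π | Good ℓ k m (m + d) π}.ncard : ℤ) := by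
  induction d with
  | zero =>
    intro m _
    rw [Nat.add_zero, hg_diag, card_diag hℓ]
    push_cast
    rfl
  | succ d ih =>
    intro m hm
    have h1 := ih (m + 1) (by omega)
    have h2 := ih m hm
    have h3 := card_rec (ℓ := ℓ) (n := m + d) hℓ hm (by omega)
    rw [show m + 1 + d = m + d + 1 by omega] at h1
    rw [← Nat.add_assoc, hg_rec _ _ (by omega), Nat.add_sub_cancel, h1, h2, h3]
    push_cast
    ring


/-- for `0 ≤ k ≤ m ≤ n`, the entry `g_{ℓ,n}^m` of Euler's difference table
equals the number of colored permutations all of whose `k`-circular successions lie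
in `[m]`.  A `k`-circular succession of `π = (ε, σ)` at position `i` is a value
`σ i = i + k` (no wraparound) with color `ε (σ i) = 0`; it lies in `[m]` iff the value
`σ i` is at most `m`, i.e. `(σ i : ℕ) < m` in the 0-indexed model. -/
theorem stmt_0 (ℓ : ℕ) (hℓ : 1 ≤ ℓ) (g : ℕ → ℕ → ℤ)
    (hg_diag : ∀ n : ℕ, g n n = (ℓ : ℤ) ^ n * (Nat.factorial n : ℤ))
    (hg_rec : ∀ n m : ℕ, m < n → g n m = g n (m + 1) - g (n - 1) m)
    (k m n : ℕ) (hkm : k ≤ m) (hmn : m ≤ n) :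
    g n m = Nat.card {π : ColoredPerm ℓ n //
      ∀ i : Fin n, ((π.2 i : ℕ) = (i : ℕ) + k ∧ π.1 (π.2 i) = 0) → (π.2 i : ℕ) < m} := by
  obtain ⟨d, rfl⟩ := Nat.exists_eq_add_of_le hmn
  exact main_aux ℓ hℓ g hg_diag hg_rec k d m hkm
end

section
/- Let ℓ ≥ 1 and 0 ≤ m ≤ n. Then g_{ℓ,n}^m equals the number of colored permutations π ∈ G_{ℓ,n} having no m-circular succession. -/
/-- Colored permutations of `α` without uncolored fixed points in `P`. -/
abbrev NoFix (ℓ : ℕ) (α : Type) (P : α → Prop) : Type :=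
  {x : (α → ZMod ℓ) × Equiv.Perm α // ∀ v, P v → ¬(x.2 v = v ∧ x.1 v = 0)}

lemma noFix_congr (ℓ : ℕ) {α β : Type} (e : α ≃ β) (P : α → Prop) (Q : β → Prop)
    (h : ∀ a, P a ↔ Q (e a)) : Nat.card (NoFix ℓ α P) = Nat.card (NoFix ℓ β Q) := by
  refine Nat.card_congr (Equiv.subtypeEquiv
    (Equiv.prodCongr (e.arrowCongr (Equiv.refl _)) e.permCongr) ?_)
  rintro ⟨c, s⟩
  rw [← e.forall_congr_right]
  simp [h, Equiv.permCongr_apply]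

lemma noFix_option (ℓ : ℕ) [NeZero ℓ] {α : Type} [Fintype α] (P : Option α → Prop)
    (h : ¬ P none) :
    Nat.card (NoFix ℓ (Option α) P) =
      Nat.card (NoFix ℓ (Option α) (fun v => P v ∨ v = none)) +
      Nat.card (NoFix ℓ α (fun v => P (some v))) := by
  classical
  let F : NoFix ℓ α (fun v => P (some v)) →
      {x : NoFix ℓ (Option α) P // (x.1.2 none = none ∧ x.1.1 none = 0)} := fun y =>
    ⟨⟨(fun o => o.elim 0 y.1.1, y.1.2.optionCongr), by
      rintro (_ | v) hv
      · exact absurd hv h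
      · simpa using y.2 v hv⟩, by simp⟩
  have hF : Function.Bijective F := by
    constructor
    · rintro ⟨⟨c, s⟩, hy⟩ ⟨⟨c', s'⟩, hy'⟩ hh
      simp only [F, Subtype.mk.injEq, Prod.mk.injEq] at hh ⊢
      refine ⟨?_, ?_⟩
      · funext a
        exact congrFun hh.1 (some a)
      · exact Equiv.optionCongr_injective hh.2
    · rintro ⟨⟨⟨c, s⟩, hy⟩, h1, h2⟩
      have hs : (Equiv.removeNone s).optionCongr = s := by
        have h1' : s none = none := h1
        rw [map_equiv_removeNone, h1', Equiv.swap_self]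
        rfl
      refine ⟨⟨(fun a => c (some a), Equiv.removeNone s), ?_⟩, ?_⟩
      · intro v hv hc
        refine hy (some v) hv ⟨?_, hc.2⟩
        simp only at hc ⊢
        have h3 : (Equiv.removeNone s).optionCongr (some v) = some v := by
          rw [Equiv.optionCongr_apply, Option.map_some, hc.1]
        rwa [hs] at h3
      · simp only [F, Subtype.mk.injEq, Prod.mk.injEq]
        refine ⟨?_, hs⟩
        funext o
        rcases o with _ | a
        · exact h2.symm
        · rfl
  rw [Nat.card_congr (Equiv.ofBijective F hF)]
  have e2 : {x : NoFix ℓ (Option α) P // ¬ (x.1.2 none = none ∧ x.1.1 none = 0)} ≃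
      NoFix ℓ (Option α) (fun v => P v ∨ v = none) := by
    refine (Equiv.subtypeSubtypeEquivSubtypeInter _
      (fun x : (Option α → ZMod ℓ) × Equiv.Perm (Option α) =>
        ¬ (x.2 none = none ∧ x.1 none = 0))).trans (Equiv.subtypeEquivRight ?_)
    intro x
    constructor
    · rintro ⟨ha, hb⟩ v (hv | rfl)
      · exact ha v hv
      · exact hb
    · intro ha
      exact ⟨fun v hv => ha v (Or.inl hv), ha none (Or.inr rfl)⟩
  rw [← Nat.card_congr e2, add_comm, ← Nat.card_sum]
  exact Nat.card_congr (Equiv.sumCompl _).symm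

/-- Cyclic shift by `m` on `Fin n`. -/
def shiftPerm (n m : ℕ) (h : m ≤ n) : Equiv.Perm (Fin n) where
  toFun i := ⟨if (i : ℕ) + m < n then i + m else i + m - n, by split <;> omega⟩
  invFun i := ⟨if m ≤ (i : ℕ) then i - m else i + n - m, by split <;> omega⟩
  left_inv i := by
    ext; simp only; split <;> split <;> omega
  right_inv i := by
    ext; simp only; split <;> split <;> omega

lemma card_shift (ℓ n m : ℕ) (h : m ≤ n) :
    Nat.card {π : ColoredPerm ℓ n //
      ∀ i : Fin n, ¬((π.2 i : ℕ) = (i : ℕ) + m ∧ π.1 (π.2 i) = 0)} =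
    Nat.card (NoFix ℓ (Fin n) (fun v => m ≤ (v : ℕ))) := by
  refine Nat.card_congr (Equiv.subtypeEquiv
    (Equiv.prodCongr (Equiv.refl _) (Equiv.mulRight (shiftPerm n m h)⁻¹)) ?_)
  rintro ⟨c, s⟩
  refine Iff.trans ?_ (shiftPerm n m h).forall_congr_right
  refine forall_congr' fun i => ?_
  have key : (s i : ℕ) = (i : ℕ) + m ↔
      (m ≤ (shiftPerm n m h i : ℕ) ∧ s i = shiftPerm n m h i) := by
    have := (s i).2
    rw [Fin.ext_iff]
    simp only [shiftPerm, Equiv.coe_fn_mk]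
    split <;> omega
  simp only [key, Equiv.prodCongr_apply, Prod.map, Equiv.coe_mulRight, Equiv.Perm.mul_apply,
    Equiv.Perm.inv_def, Equiv.symm_apply_apply, Equiv.refl_apply]
  constructor
  · rintro hn hm ⟨h1, h2⟩
    exact hn ⟨⟨hm, h1⟩, by rw [h1]; exact h2⟩
  · rintro hn ⟨⟨hm, h1⟩, h2⟩
    exact hn hm ⟨h1, by rw [← h1]; exact h2⟩

lemma noFix_rec (ℓ n m : ℕ) [NeZero ℓ] (h : m ≤ n) :
    Nat.card (NoFix ℓ (Fin (n+1)) (fun v => m + 1 ≤ (v : ℕ))) =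
      Nat.card (NoFix ℓ (Fin (n+1)) (fun v => m ≤ (v : ℕ))) +
      Nat.card (NoFix ℓ (Fin n) (fun v => m ≤ (v : ℕ))) := by
  let p : Fin (n+1) := ⟨m, by omega⟩
  let e := finSuccEquiv' p
  let P : Option (Fin n) → Prop := fun o => m + 1 ≤ ((e.symm o : Fin (n+1)) : ℕ)
  have hn : e.symm none = p := by simp [e]
  rw [noFix_congr ℓ e (fun v => m + 1 ≤ (v : ℕ)) P (by simp [P]),
    noFix_option ℓ P (by simp [P, hn, p]),
    noFix_congr ℓ e (fun v => m ≤ (v : ℕ)) (fun v => P v ∨ v = none) ?_]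
  · congr 3
    funext v
    simp only [P, e, finSuccEquiv'_symm_some, Fin.succAbove, p, Fin.lt_def, eq_iff_iff]
    split <;> simp_all; omega
  · intro a
    rw [show (e a = none ↔ a = p) by rw [← hn, Equiv.eq_symm_apply]]
    simp only [P, Equiv.symm_apply_apply, Fin.ext_iff, p]
    omega

/-- for `0 ≤ m ≤ n`, the entry `g_{ℓ,n}^m` equals the number of colored
permutations `π = (ε, σ)` having no `m`-circular succession, i.e. no position `i` with
`σ i = i + m` (no wraparound) and `ε (σ i) = 0`. -/
theorem stmt_2 (ℓ : ℕ) (hℓ : 1 ≤ ℓ) (g : ℕ → ℕ → ℤ)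
    (hg_diag : ∀ n : ℕ, g n n = (ℓ : ℤ) ^ n * (Nat.factorial n : ℤ))
    (hg_rec : ∀ n m : ℕ, m < n → g n m = g n (m + 1) - g (n - 1) m)
    (m n : ℕ) (hmn : m ≤ n) :
    g n m = Nat.card {π : ColoredPerm ℓ n //
      ∀ i : Fin n, ¬((π.2 i : ℕ) = (i : ℕ) + m ∧ π.1 (π.2 i) = 0)} := by
  haveI : NeZero ℓ := ⟨by omega⟩
  rw [card_shift ℓ n m hmn]
  obtain ⟨k, rfl⟩ := Nat.exists_eq_add_of_le hmn
  clear hmn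
  induction k generalizing m with
  | zero =>
    rw [Nat.add_zero, hg_diag, Nat.card_congr (Equiv.subtypeUnivEquiv ?_)]
    · simp [Fintype.card_perm]
    · intro x v hv
      have := v.2
      omega
  | succ k ih =>
    have h1 := ih (m + 1)
    have h2 := ih m
    rw [show m + 1 + k = m + k + 1 by omega] at h1
    rw [← Nat.add_assoc, hg_rec _ _ (by omega), h1, Nat.add_sub_cancel, h2,
      noFix_rec ℓ (m + k) m (by omega)]
    push_cast
    ring
end

section
/- Let ℓ ≥ 1 and let k, m, n be integers with m ≥ 0 and 0 ≤ k ≤ n − m. Then c_{ℓ,n,m}^k = C(n−k, m) · g_{ℓ,n−m}^k, where C(n−k, m) is a binomial coefficient. -/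
/-- The number `c^k(π)` of `k`-circular successions of `π = (ε, σ)`:
positions `i` with `σ i = i + k` (no wraparound) and `ε (σ i) = 0`. -/
noncomputable def csuccCount (ℓ n k : ℕ) (π : ColoredPerm ℓ n) : ℕ :=
  Nat.card {i : Fin n // (π.2 i : ℕ) = (i : ℕ) + k ∧ π.1 (π.2 i) = 0}

/-- `c_{ℓ,n,m}^k`: the number of colored permutations in `G_{ℓ,n}` with exactly `m`
`k`-circular successions. -/
noncomputable def cCount (ℓ n k m : ℕ) : ℕ :=
  Nat.card {π : ColoredPerm ℓ n // csuccCount ℓ n k π = m}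

open Finset in
lemma aux_perm {n : ℕ} (τ : Equiv.Perm (Fin n)) (T : Finset (Fin n)) :
    (univ.filter (fun σ : Equiv.Perm (Fin n) => ∀ i ∈ T, σ i = τ i)).card
      = (n - T.card).factorial := by
  classical
  have e2 : {σ : Equiv.Perm (Fin n) // ∀ i ∈ T, σ i = τ i} ≃
      {f : Equiv.Perm (Fin n) // ∀ a, ¬ (a ∉ T) → f a = a} :=
    (Equiv.mulLeft τ⁻¹).subtypeEquiv (by
      intro σ
      simp only [not_not, Equiv.coe_mulLeft, Equiv.Perm.mul_apply]
      refine forall₂_congr fun i _ => ?_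
      rw [Equiv.Perm.inv_eq_iff_eq])
  have e := e2.trans (Equiv.Perm.subtypeEquivSubtypePerm (fun a => a ∉ T)).symm
  rw [← Fintype.card_subtype, Fintype.card_congr e, Fintype.card_perm]
  congr 1
  rw [Fintype.card_subtype_compl]
  simp

open Finset in
lemma aux_col {ℓ n : ℕ} [NeZero ℓ] (τ : Equiv.Perm (Fin n)) (T : Finset (Fin n)) :
    (univ.filter (fun ε : Fin n → ZMod ℓ => ∀ i ∈ T, ε (τ i) = 0)).card
      = ℓ ^ (n - T.card) := by
  classical
  have : (univ.filter (fun ε : Fin n → ZMod ℓ => ∀ i ∈ T, ε (τ i) = 0)) =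
      Fintype.piFinset (fun j => if j ∈ T.map τ.toEmbedding then ({0} : Finset (ZMod ℓ)) else univ) := by
    ext ε
    simp only [mem_filter, mem_univ, true_and, Fintype.mem_piFinset]
    constructor
    · intro h j
      split_ifs with hj
      · obtain ⟨i, hi, rfl⟩ := Finset.mem_map.1 hj
        simpa using h i hi
      · simp
    · intro h i hi
      have h2 := h (τ i)
      have h4 : τ i ∈ T.map τ.toEmbedding := Finset.mem_map.2 ⟨i, hi, rfl⟩
      rw [if_pos h4] at h2
      simpa using h2
  rw [this, Fintype.card_piFinset]
  have h3 : ∀ j, (if j ∈ T.map τ.toEmbedding then ({0} : Finset (ZMod ℓ)) else univ).card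
      = if j ∈ T.map τ.toEmbedding then 1 else ℓ := by
    intro j
    split_ifs <;> simp [ZMod.card]
  simp only [h3]
  rw [Finset.prod_ite, Finset.prod_const_one, one_mul, Finset.prod_const]
  congr 1
  rw [Finset.filter_not, Finset.filter_mem_eq_inter, Finset.univ_inter, ← Finset.compl_eq_univ_sdiff,
    Finset.card_compl, Finset.card_map, Fintype.card_fin]

/-- the set of succession positions -/
noncomputable def succSet {ℓ n : ℕ} (k : ℕ) (π : ColoredPerm ℓ n) : Finset (Fin n) := by
  classical
  exact Finset.univ.filter (fun i => (π.2 i : ℕ) = (i : ℕ) + k ∧ π.1 (π.2 i) = 0)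

lemma mem_succSet {ℓ n : ℕ} (k : ℕ) (π : ColoredPerm ℓ n) (i : Fin n) :
    i ∈ succSet k π ↔ ((π.2 i : ℕ) = (i : ℕ) + k ∧ π.1 (π.2 i) = 0) := by
  simp [succSet]

/-- admissible positions -/
def admSet (n k : ℕ) : Finset (Fin n) := Finset.univ.filter (fun i => (i : ℕ) + k < n)

lemma card_admSet (n k : ℕ) : (admSet n k).card = n - k := by
  have : (admSet n k).map Fin.valEmbedding = Finset.range (n - k) := by
    ext x
    simp only [admSet, Finset.mem_map, Finset.mem_filter, Finset.mem_univ, true_and,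
      Fin.valEmbedding_apply, Finset.mem_range]
    constructor
    · rintro ⟨a, h, rfl⟩; omega
    · intro h; exact ⟨⟨x, by omega⟩, by simp; omega, rfl⟩
  rw [← Finset.card_map Fin.valEmbedding, this, Finset.card_range]

lemma succSet_subset {ℓ n : ℕ} (k : ℕ) (π : ColoredPerm ℓ n) : succSet k π ⊆ admSet n k := by
  intro i hi
  have := ((mem_succSet k π i).1 hi).1
  have h2 := (π.2 i).2
  simp only [admSet, Finset.mem_filter, Finset.mem_univ, true_and]
  omega

lemma exists_shift (n k : ℕ) : ∃ τ : Equiv.Perm (Fin n), ∀ i ∈ admSet n k, (τ i : ℕ) = i + k := by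
  rcases Nat.eq_zero_or_pos n with rfl | h
  · exact ⟨1, fun i => i.elim0⟩
  · haveI : NeZero n := ⟨h.ne'⟩
    refine ⟨Equiv.addRight (Fin.ofNat n k), fun i hi => ?_⟩
    simp only [admSet, Finset.mem_filter, Finset.mem_univ, true_and] at hi
    simp only [Equiv.coe_addRight, Fin.val_add, Fin.val_ofNat, Nat.add_mod_mod]
    exact Nat.mod_eq_of_lt hi

open Finset in
open scoped Classical in
lemma aux_base {ℓ n : ℕ} [NeZero ℓ] (k : ℕ) (T : Finset (Fin n)) (hT : T ⊆ admSet n k) :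
    (univ.filter (fun π : ColoredPerm ℓ n => T ⊆ succSet k π)).card
      = ℓ ^ (n - T.card) * (n - T.card).factorial := by
  obtain ⟨τ, hτ⟩ := exists_shift n k
  rw [← aux_perm τ T, ← aux_col τ T, ← card_product]
  congr 1
  ext ⟨ε, σ⟩
  simp only [mem_filter, mem_univ, true_and, mem_product]
  have key : ∀ i ∈ T, (i ∈ succSet k ((ε, σ) : ColoredPerm ℓ n) ↔ ε (τ i) = 0 ∧ σ i = τ i) := by
    intro i hi
    rw [mem_succSet, ← hτ i (hT hi), ← Fin.ext_iff]
    constructor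
    · rintro ⟨h1, h2⟩
      exact ⟨h1 ▸ h2, h1⟩
    · rintro ⟨h1, h2⟩
      exact ⟨h2, h2 ▸ h1⟩
  constructor
  · intro h
    exact ⟨fun i hi => ((key i hi).1 (h hi)).1, fun i hi => ((key i hi).1 (h hi)).2⟩
  · rintro ⟨h1, h2⟩ i hi
    exact (key i hi).2 ⟨h1 i hi, h2 i hi⟩

open Finset in
open scoped Classical in
lemma aux_main {ℓ n : ℕ} [NeZero ℓ] (g : ℕ → ℕ → ℤ)
    (hg_diag : ∀ n : ℕ, g n n = (ℓ : ℤ) ^ n * (Nat.factorial n : ℤ))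
    (hg_rec : ∀ n m : ℕ, m < n → g n m = g n (m + 1) - g (n - 1) m) (k : ℕ)
    (S : Finset (Fin n)) : ∀ T : Finset (Fin n), T ⊆ admSet n k → S ⊆ admSet n k → Disjoint T S →
    ((univ.filter (fun π : ColoredPerm ℓ n => T ⊆ succSet k π ∧ Disjoint S (succSet k π))).card : ℤ)
      = g (n - T.card) (n - T.card - S.card) := by
  induction S using Finset.induction_on with
  | empty =>
    intro T hT _ _
    have := aux_base (ℓ := ℓ) k T hT
    simp only [disjoint_empty_left, and_true, card_empty, Nat.sub_zero, this, hg_diag]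
    push_cast
    rfl
  | insert a S ha ih =>
    intro T hT hS hd
    rw [insert_subset_iff] at hS
    rw [disjoint_insert_right] at hd
    have h1 := ih T hT hS.2 hd.2
    have h2 := ih (insert a T) (insert_subset hS.1 hT) hS.2
      (disjoint_insert_left.2 ⟨ha, hd.2⟩)
    have hc : T.card + S.card + 1 ≤ n := by
      have h := card_le_univ (insert a T ∪ S)
      rw [card_union_of_disjoint (disjoint_insert_left.2 ⟨ha, hd.2⟩),
        card_insert_of_notMem hd.1, Fintype.card_fin] at h
      omega
    rw [card_insert_of_notMem hd.1] at h2
    rw [card_insert_of_notMem ha, hg_rec _ _ (by omega)]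
    have e1 : n - T.card - (S.card + 1) + 1 = n - T.card - S.card := by omega
    have e2 : n - (T.card + 1) = n - T.card - 1 := by omega
    have e3 : n - T.card - 1 - S.card = n - T.card - (S.card + 1) := by omega
    rw [e2, e3] at h2
    rw [e1, ← h1, ← h2, eq_sub_iff_add_eq]
    norm_cast
    rw [← card_union_of_disjoint]
    · congr 1
      ext π
      simp only [mem_union, mem_filter, mem_univ, true_and, disjoint_insert_left,
        insert_subset_iff]
      tauto
    · rw [Finset.disjoint_left]
      intro π
      simp only [mem_filter, mem_univ, true_and, disjoint_insert_left, insert_subset_iff]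
      tauto

open Finset in
theorem stmt_5 (ℓ : ℕ) (hℓ : 1 ≤ ℓ) (g : ℕ → ℕ → ℤ)
    (hg_diag : ∀ n : ℕ, g n n = (ℓ : ℤ) ^ n * (Nat.factorial n : ℤ))
    (hg_rec : ∀ n m : ℕ, m < n → g n m = g n (m + 1) - g (n - 1) m)
    (k m n : ℕ) (hmn : m ≤ n) (hk : k ≤ n - m) :
    (cCount ℓ n k m : ℤ) = ((n - k).choose m : ℤ) * g (n - m) k := by
  classical
  haveI : NeZero ℓ := ⟨by omega⟩
  have hcs : ∀ π : ColoredPerm ℓ n, csuccCount ℓ n k π = (succSet k π).card := by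
    intro π
    rw [csuccCount, Nat.card_eq_fintype_card, Fintype.card_subtype]
    congr 1
  have h1 : cCount ℓ n k m =
      (univ.filter (fun π : ColoredPerm ℓ n => (succSet k π).card = m)).card := by
    rw [cCount, Nat.card_eq_fintype_card, Fintype.card_subtype]
    simp only [hcs]
  rw [h1, card_eq_sum_card_fiberwise (f := fun π => succSet k π)
    (t := powersetCard m (admSet n k))]
  · push_cast
    rw [← card_admSet n k, ← card_powersetCard, ← nsmul_eq_mul]
    apply sum_eq_card_nsmul
    intro T hT
    rw [mem_powersetCard] at hT
    have h := aux_main (ℓ := ℓ) g hg_diag hg_rec k (admSet n k \ T) T hT.1 sdiff_subset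
      disjoint_sdiff
    rw [card_sdiff_of_subset hT.1, card_admSet, hT.2] at h
    rw [show n - m - (n - k - m) = k by omega] at h
    rw [← h]
    congr 2
    ext π
    simp only [mem_filter, mem_univ, true_and]
    constructor
    · rintro ⟨_, rfl⟩
      exact ⟨subset_rfl, sdiff_disjoint⟩
    · rintro ⟨h2, h3⟩
      have : succSet k π = T := by
        refine subset_antisymm (fun i hi => ?_) h2
        by_contra hi2
        exact Finset.disjoint_left.1 h3 (mem_sdiff.2 ⟨succSet_subset k π hi, hi2⟩) hi
      exact ⟨this ▸ hT.2, this⟩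
  · intro π hπ
    simp only [coe_filter, mem_univ, true_and, Set.mem_setOf_eq] at hπ
    exact mem_coe.2 (mem_powersetCard.2 ⟨succSet_subset k π, hπ⟩)
end

section
/- For every n ≥ 1 there exists a bijection φ from the symmetric group S_n onto itself such that for every σ ∈ S_n and every integer k ≥ 1, the set of k-circular successions of σ equals the set of k-linear successions of φ(σ); that is, {i + k : i ∈ [n], σ(i) = i + k ≤ n} = {τ(i) : 2 ≤ i ≤ n, τ(i) = τ(i−1) + k} where τ = φ(σ). -/
/-- The set of `k`-circular successions of a permutation `σ` of `[n]`,
recorded by their values: `{i + k : i ∈ [n], σ i = i + k ≤ n}`.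
We model `[n] = {1,…,n}` by `Fin n` (so `j : Fin n` represents the value `j + 1`). -/
def circSet (n k : ℕ) (σ : Equiv.Perm (Fin n)) : Set (Fin n) :=
  {j | ∃ i : Fin n, σ i = j ∧ (j : ℕ) = (i : ℕ) + k}

/-- The set of `k`-linear successions of a permutation `τ` of `[n]`, recorded by their
values: `{τ i : 2 ≤ i ≤ n, τ i = τ (i−1) + k}`.  In the 0-indexed model, position
`i ∈ {2,…,n}` corresponds to the successor of a position `i' : Fin n` with `i' + 1 < n`. -/
def linSet (n k : ℕ) (τ : Equiv.Perm (Fin n)) : Set (Fin n) :=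
  {j | ∃ i : Fin n, ∃ hi : (i : ℕ) + 1 < n,
    τ ⟨(i : ℕ) + 1, hi⟩ = j ∧ (j : ℕ) = (τ i : ℕ) + k}

/-- Insert the largest value at position `p`; permutations are given by their inverses
(value to position). -/
def insPos {n : ℕ} (p : Fin (n + 1)) (g : Equiv.Perm (Fin n)) : Equiv.Perm (Fin (n + 1)) :=
  ((finSuccEquiv' (Fin.last n)).trans (Equiv.optionCongr g)).trans (finSuccEquiv' p).symm

lemma insPos_last {n : ℕ} (p : Fin (n + 1)) (g : Equiv.Perm (Fin n)) :
    insPos p g (Fin.last n) = p := by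
  simp [insPos]

lemma insPos_castSucc {n : ℕ} (p : Fin (n + 1)) (g : Equiv.Perm (Fin n)) (a : Fin n) :
    insPos p g a.castSucc = p.succAbove (g a) := by
  have h : finSuccEquiv' (Fin.last n) a.castSucc = some a := by
    rw [← Fin.succAbove_last_apply, finSuccEquiv'_succAbove]
  simp [insPos, h]

lemma insPos_inj {n : ℕ} {p q : Fin (n + 1)} {g h : Equiv.Perm (Fin n)}
    (e : insPos p g = insPos q h) : p = q ∧ g = h := by
  have h1 : p = q := by rw [← insPos_last p g, e, insPos_last]
  subst h1
  refine ⟨rfl, Equiv.ext fun a => ?_⟩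
  have := congrArg (fun f => f a.castSucc) e
  simp only [insPos_castSucc] at this
  exact Fin.succAbove_right_injective this

/-- Position just after the value `i`, or the front if `i` is the largest value. -/
def posAfter {n : ℕ} (i : Fin (n + 1)) (g : Equiv.Perm (Fin n)) : Fin (n + 1) :=
  Fin.lastCases 0 (fun a => (g a).succ) i

lemma posAfter_inj {n : ℕ} (g : Equiv.Perm (Fin n)) {i j : Fin (n + 1)}
    (h : posAfter i g = posAfter j g) : i = j := by
  induction i using Fin.lastCases <;> induction j using Fin.lastCases <;>
    simp_all [posAfter, Fin.succ_ne_zero, (Fin.succ_ne_zero _).symm]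

/-- Insert the largest value right after the value `i` in the word. -/
def linIns {n : ℕ} (x : Fin (n + 1) × Equiv.Perm (Fin n)) : Equiv.Perm (Fin (n + 1)) :=
  insPos (posAfter x.1 x.2) x.2

/-- Insert the largest value right after `i` in its cycle. -/
def circIns {n : ℕ} (x : Fin (n + 1) × Equiv.Perm (Fin n)) : Equiv.Perm (Fin (n + 1)) :=
  (Equiv.swap x.1 (Fin.last n)).trans (insPos (Fin.last n) x.2)

lemma linIns_bij (n : ℕ) : Function.Bijective (linIns (n := n)) := by
  rw [Fintype.bijective_iff_injective_and_card]
  constructor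
  · rintro ⟨i, g⟩ ⟨j, h⟩ e
    obtain ⟨h1, h2⟩ := insPos_inj e
    simp only at h1 h2
    subst h2
    rw [posAfter_inj g h1]
  · simp [Fintype.card_perm, Nat.factorial_succ]

lemma circIns_bij (n : ℕ) : Function.Bijective (circIns (n := n)) := by
  rw [Fintype.bijective_iff_injective_and_card]
  constructor
  · rintro ⟨i, g⟩ ⟨j, h⟩ e
    have key : ∀ (i : Fin (n + 1)) (g : Equiv.Perm (Fin n)),
        circIns (i, g) i = Fin.last n := by
      intro i g
      simp [circIns, insPos_last]
    have h1 : i = j := by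
      apply (circIns (i, g)).injective
      rw [key, e, key]
    subst h1
    have h2 : insPos (Fin.last n) g = insPos (Fin.last n) h := by
      ext1 a
      have := congrArg (fun f => f (Equiv.swap i (Fin.last n) a)) e
      simpa [circIns] using this
    rw [(insPos_inj h2).2]
  · simp [Fintype.card_perm, Nat.factorial_succ]

/-- Excedance arcs. -/
def arcE {n : ℕ} (σ : Equiv.Perm (Fin n)) (a b : Fin n) : Prop := σ a = b ∧ a < b

/-- Ascent arcs, in terms of the value-to-position map. -/
def arcF {n : ℕ} (g : Equiv.Perm (Fin n)) (a b : Fin n) : Prop :=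
  (g a : ℕ) + 1 = (g b : ℕ) ∧ a < b

lemma arc_step {n : ℕ} (σ g : Equiv.Perm (Fin n)) (H : ∀ a b, arcE σ a b ↔ arcF g a b)
    (i a b : Fin (n + 1)) : arcE (circIns (i, σ)) a b ↔ arcF (linIns (i, g)) a b := by
  induction a using Fin.lastCases with
  | last =>
    have : ¬ (Fin.last n < b) := not_lt.2 (Fin.le_last b)
    simp [arcE, arcF, this]
  | cast a =>
    by_cases hi : i = a.castSucc
    · subst hi
      have h1 : circIns (a.castSucc, σ) a.castSucc = Fin.last n := by
        simp [circIns, insPos_last]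
      have hl : linIns (a.castSucc, g) (Fin.last n) = (g a).succ := by
        simp [linIns, insPos_last, posAfter]
      have h2 : (linIns (a.castSucc, g) a.castSucc : ℕ) + 1
          = linIns (a.castSucc, g) (Fin.last n) := by
        rw [hl]
        simp [linIns, insPos_castSucc, posAfter]
      unfold arcE arcF
      rw [h1, h2, Fin.val_inj, (linIns _).injective.eq_iff]
    · have h1 : circIns (i, σ) a.castSucc = (σ a).castSucc := by
        have : Equiv.swap i (Fin.last n) a.castSucc = a.castSucc :=
          Equiv.swap_apply_of_ne_of_ne (Ne.symm hi) (Fin.castSucc_lt_last a).ne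
        simp [circIns, this, insPos_castSucc]
      have hF : ∀ c : Fin n, (linIns (i, g) c.castSucc : ℕ) =
          ((posAfter i g).succAbove (g c) : ℕ) := by
        intro c
        simp [linIns, insPos_castSucc]
      have hl : linIns (i, g) (Fin.last n) = posAfter i g := by
        simp [linIns, insPos_last]
      have hp : (posAfter i g : ℕ) ≠ (g a : ℕ) + 1 := by
        intro h
        apply hi
        apply posAfter_inj g
        apply Fin.ext
        rw [h]
        simp [posAfter]
      induction b using Fin.lastCases with
      | last =>
        unfold arcE arcF
        rw [h1, hF, hl]
        constructor
        · rintro ⟨h, -⟩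
          exact absurd h (Fin.castSucc_lt_last _).ne
        · rintro ⟨h, -⟩
          exfalso
          simp only [Fin.succAbove, Fin.lt_def] at h
          split_ifs at h <;> simp at * <;> omega
      | cast b =>
        have H' := H a b
        unfold arcE arcF at H' ⊢
        rw [h1, hF, hF, Fin.castSucc_inj, Fin.castSucc_lt_castSucc_iff, H']
        refine and_congr_left fun _ => ?_
        simp only [Fin.succAbove, Fin.lt_def]
        split_ifs <;> simp at * <;> omega

lemma exists_arc (n : ℕ) : ∃ φ : Equiv.Perm (Fin n) ≃ Equiv.Perm (Fin n),
    ∀ σ a b, arcE σ a b ↔ arcF (φ σ) a b := by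
  induction n with
  | zero => exact ⟨Equiv.refl _, fun _ a => a.elim0⟩
  | succ n ih =>
    obtain ⟨φ, hφ⟩ := ih
    refine ⟨((Equiv.ofBijective _ (circIns_bij n)).symm.trans
      (Equiv.prodCongr (Equiv.refl _) φ)).trans (Equiv.ofBijective _ (linIns_bij n)), ?_⟩
    intro σ a b
    obtain ⟨⟨i, s⟩, rfl⟩ := (circIns_bij n).2 σ
    have : (Equiv.ofBijective _ (circIns_bij n)).symm (circIns (i, s)) = (i, s) :=
      (Equiv.ofBijective _ (circIns_bij n)).symm_apply_apply (i, s)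
    simp only [Equiv.trans_apply, this]
    exact arc_step s (φ s) (hφ s) i a b

/-- for every `n ≥ 1` there is a bijection `φ` of the symmetric group `S_n`
onto itself such that for every `σ` and every `k ≥ 1`, the set of `k`-circular successions
of `σ` equals the set of `k`-linear successions of `φ σ`. -/
theorem stmt_6 (n : ℕ) (hn : 1 ≤ n) :
    ∃ φ : Equiv.Perm (Fin n) ≃ Equiv.Perm (Fin n),
      ∀ σ : Equiv.Perm (Fin n), ∀ k : ℕ, 1 ≤ k →
        circSet n k σ = linSet n k (φ σ) := by
  obtain ⟨φ, hφ⟩ := exists_arc n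
  refine ⟨φ.trans (Equiv.inv (Equiv.Perm (Fin n))), fun σ k hk => ?_⟩
  ext j
  simp only [circSet, linSet, Set.mem_setOf_eq, Equiv.trans_apply, Equiv.inv_apply]
  constructor
  · rintro ⟨i, h1, h2⟩
    obtain ⟨h3, -⟩ := (hφ σ i j).1 ⟨h1, by rw [Fin.lt_def]; omega⟩
    have hlt : (φ σ i : ℕ) + 1 < n := h3 ▸ (φ σ j).2
    refine ⟨φ σ i, hlt, ?_, by simpa using h2⟩
    rw [Equiv.Perm.inv_eq_iff_eq]
    exact Fin.ext h3
  · rintro ⟨p, hp, h1, h2⟩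
    rw [Equiv.Perm.inv_eq_iff_eq] at h1
    have h3 : arcF (φ σ) ((φ σ)⁻¹ p) j := by
      refine ⟨?_, by rw [Fin.lt_def]; omega⟩
      rw [← h1]
      simp
    exact ⟨_, ((hφ σ _ j).2 h3).1, h2⟩
end

section
/- Let ℓ ≥ 1, n ≥ 1 and k ≥ 0. There exists a bijection Φ from G_{ℓ,n} onto itself such that for every π ∈ G_{ℓ,n}: (a) C^{k+1}(π) = L^{k+1}(Φ(π)), and (b) C^{k}(δ(π)) = L^{*(k+1)}(Φ(π)), where δ is the bijection of G_{ℓ,n} sending the one-line word π_1 π_2 ⋯ π_n to π_n π_1 π_2 ⋯ π_{n−1}. -/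
/-- `C^k(π)`: the set of `k`-circular successions of `π = (ε, σ)`, recorded by their
values `j = σ i` with `σ i = i + k` (no wraparound) and `ε (σ i) = 0`. -/
def cSet (ℓ n k : ℕ) (π : ColoredPerm ℓ n) : Set (Fin n) :=
  {j | π.1 j = 0 ∧ ∃ i : Fin n, π.2 i = j ∧ (j : ℕ) = (i : ℕ) + k}

/-- `L^k(π)`: the set of `k`-linear successions of `π = (ε, σ)` (for `k ≥ 1`), recorded
by their values `σ i` for positions `2 ≤ i ≤ n` with `σ i = σ (i−1) + k` and
`ε (σ i) = ε (σ (i−1))`. -/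
def lSet (ℓ n k : ℕ) (π : ColoredPerm ℓ n) : Set (Fin n) :=
  {j | ∃ i : Fin n, ∃ hi : (i : ℕ) + 1 < n,
    π.2 ⟨(i : ℕ) + 1, hi⟩ = j ∧ (j : ℕ) = (π.2 i : ℕ) + k ∧ π.1 j = π.1 (π.2 i)}

/-- `L^{*k}(π)`: the set of skew `k`-linear successions; it is `L^k(π)` together with the
value `k` in case `π(1) = k` (i.e. `σ(1) = k` uncolored), using the convention `π(0) = 0`. -/
def lstarSet (ℓ n k : ℕ) (π : ColoredPerm ℓ n) : Set (Fin n) :=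
  lSet ℓ n k π ∪ {j | ∃ h0 : 0 < n, π.2 ⟨0, h0⟩ = j ∧ (j : ℕ) + 1 = k ∧ π.1 j = 0}

/-- The bijection `δ` cyclically shifting the one-line notation:
`δ(π)(1) = π(n)` and `δ(π)(i) = π(i−1)` for `2 ≤ i ≤ n`.  Colors are attached to values,
so only the underlying permutation changes, by precomposition with `i ↦ i − 1 (mod n)`. -/
def deltaMap (ℓ n : ℕ) (π : ColoredPerm ℓ n) : ColoredPerm ℓ n :=
  (π.1, Equiv.trans (finRotate n).symm π.2)

/-- Relabelled Fisher-Yates code: turn a permutation of `Fin n` into a cyclic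
permutation of `Fin (n+1)`. -/
def cycG : (n : ℕ) → Equiv.Perm (Fin n) → Equiv.Perm (Fin (n + 1))
  | 0, _ => 1
  | n + 1, ρ => Equiv.Perm.decomposeFin.symm
      ((Equiv.Perm.decomposeFin ρ).1.succ, cycG n (Equiv.Perm.decomposeFin ρ).2)

theorem cycG_step (n : ℕ) (p : Fin (n + 1)) (e : Equiv.Perm (Fin n)) :
    cycG (n + 1) (Equiv.Perm.decomposeFin.symm (p, e)) =
      Equiv.Perm.decomposeFin.symm (p.succ, cycG n e) := by
  simp [cycG]

theorem cycG_inj (n : ℕ) : Function.Injective (cycG n) := by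
  induction n with
  | zero => intro a b _; exact Subsingleton.elim _ _
  | succ n ih =>
    intro a b h
    obtain ⟨⟨p, e⟩, rfl⟩ := Equiv.Perm.decomposeFin.symm.surjective a
    obtain ⟨⟨q, f⟩, rfl⟩ := Equiv.Perm.decomposeFin.symm.surjective b
    rw [cycG_step, cycG_step] at h
    have h1 := Equiv.Perm.decomposeFin.symm.injective h
    rw [Prod.mk.injEq] at h1
    rw [Fin.succ_injective _ h1.1, ih h1.2]

theorem swap_succ_iff (n : ℕ) (p : Fin (n + 1)) (z j : Fin n) :
    Equiv.swap 0 p z.succ = j.succ ↔ z = j ∧ p ≠ j.succ := by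
  rw [Equiv.swap_apply_def]
  have h1 : z.succ ≠ 0 := Fin.succ_ne_zero z
  have h2 : j.succ ≠ 0 := Fin.succ_ne_zero j
  rw [if_neg h1]
  split_ifs with h
  · constructor
    · intro h3; exact absurd h3.symm h2
    · rintro ⟨rfl, h3⟩; exact absurd h.symm h3
  · constructor
    · intro h3
      have := Fin.succ_injective _ h3
      subst this
      exact ⟨rfl, fun h4 => h h4.symm⟩
    · rintro ⟨rfl, _⟩; rfl

theorem cycG_spec (n : ℕ) : ∀ (ρ : Equiv.Perm (Fin n)) (i j : Fin n), i ≤ j →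
    (ρ i = j ↔ cycG n ρ i.castSucc = j.succ) := by
  induction n with
  | zero => intro _ i; exact i.elim0
  | succ n ih =>
    intro ρ i j hij
    obtain ⟨⟨p, e⟩, rfl⟩ := Equiv.Perm.decomposeFin.symm.surjective ρ
    rw [cycG_step]
    refine Fin.cases (fun _ => ?_) (fun i hij => ?_) i hij
    · rw [Fin.castSucc_zero, Equiv.Perm.decomposeFin_symm_apply_zero,
        Equiv.Perm.decomposeFin_symm_apply_zero]
      exact (Fin.succ_inj).symm
    · obtain ⟨j, rfl⟩ : ∃ j', j = Fin.succ j' := by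
        refine ⟨j.pred ?_, (Fin.succ_pred _ _).symm⟩
        rintro rfl
        simp [Fin.le_def] at hij
      have hij' : i ≤ j := by simpa using hij
      rw [Fin.castSucc_succ, Equiv.Perm.decomposeFin_symm_apply_succ,
        Equiv.Perm.decomposeFin_symm_apply_succ, swap_succ_iff, swap_succ_iff, ih e i j hij']
      simp

theorem cycG_cycle (n : ℕ) (ρ : Equiv.Perm (Fin n)) :
    ∀ x y, (cycG n ρ).SameCycle x y := by
  induction n with
  | zero =>
    intro x y
    have hx : x = y := Fin.ext (by omega)
    rw [hx]
  | succ n ih =>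
    obtain ⟨⟨p, e⟩, rfl⟩ := Equiv.Perm.decomposeFin.symm.surjective ρ
    rw [cycG_step]
    set t := cycG n e with ht
    set s := Equiv.Perm.decomposeFin.symm (p.succ, t) with hs
    have h0 : s 0 = p.succ := Equiv.Perm.decomposeFin_symm_apply_zero _ _
    have hsucc : ∀ z, s z.succ = Equiv.swap 0 p.succ (t z).succ :=
      fun z => Equiv.Perm.decomposeFin_symm_apply_succ _ _ _
    have app : ∀ z, s.SameCycle z (s z) := fun z => ⟨1, by simp⟩
    have h1 : ∀ z, s.SameCycle z.succ (t z).succ := by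
      intro z
      by_cases hz : (t z) = p
      · have : s z.succ = 0 := by rw [hsucc, hz, Equiv.swap_apply_right]
        have a := app z.succ
        rw [this] at a
        have b := app 0
        rw [h0, ← hz] at b
        exact a.trans b
      · have : s z.succ = (t z).succ := by
          rw [hsucc, swap_succ_iff]
          exact ⟨rfl, fun h => hz (Fin.succ_injective _ h).symm⟩
        rw [← this]
        exact app _
    have h2 : ∀ (m : ℕ) z, s.SameCycle z.succ ((t ^ m) z).succ := by
      intro m
      induction m with
      | zero => intro z; exact Equiv.Perm.SameCycle.refl _ _
      | succ m ihm =>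
        intro z
        rw [pow_succ', Equiv.Perm.mul_apply]
        exact (ihm z).trans (h1 _)
    have h3 : ∀ z w : Fin (n + 1), s.SameCycle z.succ w.succ := by
      intro z w
      obtain ⟨m, -, hm⟩ := (ih e z w).exists_pow_eq'
      rw [← hm]
      exact h2 m z
    have h4 : ∀ x, s.SameCycle 0 x := by
      intro x
      refine Fin.cases (Equiv.Perm.SameCycle.refl _ _) (fun z => ?_) x
      have b := app 0
      rw [h0] at b
      exact b.trans (h3 _ _)
    intro x y
    exact (h4 x).symm.trans (h4 y)

theorem cycG_on (n : ℕ) (ρ : Equiv.Perm (Fin n)) :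
    (cycG n ρ).IsCycleOn ((Finset.univ : Finset (Fin (n + 1))) : Set (Fin (n + 1))) :=
  ⟨by simpa using Set.bijOn_univ.2 (cycG n ρ).bijective, fun x _ y _ => cycG_cycle n ρ x y⟩

theorem cycG_ne (n : ℕ) (ρ : Equiv.Perm (Fin n)) (i : Fin n) :
    ((cycG n ρ) ^ ((i : ℕ) + 1)) 0 ≠ 0 := by
  intro h
  rw [(cycG_on n ρ).pow_apply_eq (Finset.mem_univ _), Finset.card_univ, Fintype.card_fin] at h
  have := Nat.le_of_dvd (by omega) h
  omega

/-- the word read along the cycle -/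
def wordFun (n : ℕ) (ρ : Equiv.Perm (Fin n)) (i : Fin n) : Fin n :=
  (((cycG n ρ) ^ ((i : ℕ) + 1)) 0).pred (cycG_ne n ρ i)

theorem wordFun_succ (n : ℕ) (ρ : Equiv.Perm (Fin n)) (i : Fin n) :
    (wordFun n ρ i).succ = ((cycG n ρ) ^ ((i : ℕ) + 1)) 0 := by
  simp [wordFun]

theorem wordFun_inj (n : ℕ) (ρ : Equiv.Perm (Fin n)) : Function.Injective (wordFun n ρ) := by
  intro a b h
  have h' := congrArg Fin.succ h
  rw [wordFun_succ, wordFun_succ, (cycG_on n ρ).pow_apply_eq_pow_apply (Finset.mem_univ _),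
    Finset.card_univ, Fintype.card_fin] at h'
  have := Nat.ModEq.eq_of_lt_of_lt h' (by omega) (by omega)
  exact Fin.ext (by omega)

/-- the word as a permutation -/
noncomputable def wordPerm (n : ℕ) (ρ : Equiv.Perm (Fin n)) : Equiv.Perm (Fin n) :=
  Equiv.ofBijective (wordFun n ρ) (Finite.injective_iff_bijective.1 (wordFun_inj n ρ))

theorem wordPerm_succ (n : ℕ) (ρ : Equiv.Perm (Fin n)) (i : Fin n) :
    (wordPerm n ρ i).succ = ((cycG n ρ) ^ ((i : ℕ) + 1)) 0 := wordFun_succ n ρ i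

theorem cycG_pow_top (n : ℕ) (ρ : Equiv.Perm (Fin n)) : ((cycG n ρ) ^ (n + 1)) 0 = 0 := by
  rw [(cycG_on n ρ).pow_apply_eq (Finset.mem_univ _)]
  simp

theorem wordPerm_inj (n : ℕ) : Function.Injective (wordPerm n) := by
  intro ρ ρ' h
  apply cycG_inj n
  have key : ∀ m : ℕ, m ≤ n + 1 → ((cycG n ρ) ^ m) 0 = ((cycG n ρ') ^ m) 0 := by
    intro m hm
    rcases m with _ | m
    · rfl
    · rcases Nat.lt_or_ge m n with h1 | h1
      · have e1 := wordPerm_succ n ρ ⟨m, h1⟩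
        have e2 := wordPerm_succ n ρ' ⟨m, h1⟩
        rw [h] at e1
        exact e1.symm.trans e2
      · obtain rfl : m = n := by omega
        rw [cycG_pow_top, cycG_pow_top]
  ext1 x
  obtain ⟨m, hm, rfl⟩ := (cycG_on n ρ).exists_pow_eq (Finset.mem_univ 0) (Finset.mem_univ x)
  rw [Finset.card_univ, Fintype.card_fin] at hm
  have e1 := key (m + 1) (by omega)
  rw [pow_succ', pow_succ', Equiv.Perm.mul_apply, Equiv.Perm.mul_apply] at e1
  rw [e1, key m (by omega)]

theorem wordPerm_zero (n : ℕ) (ρ : Equiv.Perm (Fin n)) (h0 : 0 < n) (j : Fin n) :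
    ρ ⟨0, h0⟩ = j ↔ wordPerm n ρ ⟨0, h0⟩ = j := by
  rw [cycG_spec n ρ ⟨0, h0⟩ j (Nat.zero_le _), ← Fin.succ_inj (a := wordPerm n ρ ⟨0, h0⟩),
    wordPerm_succ]
  simp

theorem wordPerm_next (n : ℕ) (ρ : Equiv.Perm (Fin n)) (i : Fin n) (hi : (i : ℕ) + 1 < n)
    (j : Fin n) (hij : (i : ℕ) + 1 ≤ j) :
    ρ ⟨i + 1, hi⟩ = j ↔ ∃ m : Fin n, ∃ hm : (m : ℕ) + 1 < n,
      wordPerm n ρ ⟨m + 1, hm⟩ = j ∧ wordPerm n ρ m = i := by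
  rw [cycG_spec n ρ ⟨i + 1, hi⟩ j hij]
  have hc : (Fin.castSucc ⟨i + 1, hi⟩ : Fin (n + 1)) = i.succ := by ext; simp
  rw [hc]
  have next : ∀ m : Fin n, cycG n ρ (wordPerm n ρ m).succ = ((cycG n ρ) ^ ((m : ℕ) + 1 + 1)) 0 := by
    intro m
    rw [wordPerm_succ, pow_succ' _ ((m : ℕ) + 1), Equiv.Perm.mul_apply]
  constructor
  · intro h
    obtain ⟨m, rfl⟩ := (wordPerm n ρ).surjective i
    rw [next] at h
    have hm : (m : ℕ) + 1 < n := by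
      by_contra hcon
      have : (m : ℕ) + 1 = n := by omega
      rw [this, cycG_pow_top] at h
      exact Fin.succ_ne_zero _ h.symm
    refine ⟨m, hm, ?_, rfl⟩
    rw [← Fin.succ_inj, wordPerm_succ]
    exact h
  · rintro ⟨m, hm, h1, rfl⟩
    rw [next, ← h1, wordPerm_succ]

/-- partial sums of the colors along a word -/
def colSum (ℓ n : ℕ) (τ : Equiv.Perm (Fin n)) (ε : Fin n → ZMod ℓ) (x : Fin n) : ZMod ℓ :=
  ∑ m : Fin n, if m ≤ τ.symm x then ε (τ m) else 0

theorem colSum_zero (ℓ n : ℕ) (τ : Equiv.Perm (Fin n)) (ε : Fin n → ZMod ℓ) (h0 : 0 < n) :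
    colSum ℓ n τ ε (τ ⟨0, h0⟩) = ε (τ ⟨0, h0⟩) := by
  unfold colSum
  rw [Finset.sum_eq_single ⟨0, h0⟩]
  · simp
  · intro b _ hb
    rw [if_neg]
    rw [Equiv.symm_apply_apply]
    intro h
    apply hb
    ext
    simpa [Fin.le_def] using h
  · simp

theorem colSum_succ (ℓ n : ℕ) (τ : Equiv.Perm (Fin n)) (ε : Fin n → ZMod ℓ) (i : Fin n)
    (hi : (i : ℕ) + 1 < n) :
    colSum ℓ n τ ε (τ ⟨i + 1, hi⟩) = colSum ℓ n τ ε (τ i) + ε (τ ⟨i + 1, hi⟩) := by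
  unfold colSum
  have : ε (τ ⟨i + 1, hi⟩) = ∑ m : Fin n, if m = ⟨i + 1, hi⟩ then ε (τ m) else 0 := by simp
  rw [this, ← Finset.sum_add_distrib]
  apply Finset.sum_congr rfl
  intro m _
  simp only [Equiv.symm_apply_apply, Fin.le_def, Fin.ext_iff]
  split_ifs <;> first | omega | simp

theorem colSum_inj (ℓ n : ℕ) (τ : Equiv.Perm (Fin n)) : Function.Injective (colSum ℓ n τ) := by
  intro ε ε' h
  funext x
  obtain ⟨⟨m, hm⟩, rfl⟩ := τ.surjective x
  rcases m with _ | m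
  · rw [← colSum_zero ℓ n τ ε hm, ← colSum_zero ℓ n τ ε' hm, h]
  · have a := colSum_succ ℓ n τ ε ⟨m, by omega⟩ hm
    have b := colSum_succ ℓ n τ ε' ⟨m, by omega⟩ hm
    rw [h] at a
    exact add_left_cancel (a.symm.trans b)

/-- the map Φ -/
noncomputable def phiMap (ℓ n : ℕ) (π : ColoredPerm ℓ n) : ColoredPerm ℓ n :=
  (colSum ℓ n (wordPerm n (deltaMap ℓ n π).2) π.1, wordPerm n (deltaMap ℓ n π).2)

theorem phiMap_inj (ℓ n : ℕ) : Function.Injective (phiMap ℓ n) := by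
  rintro ⟨ε, σ⟩ ⟨ε', σ'⟩ h
  simp only [phiMap, deltaMap, Prod.mk.injEq] at h
  obtain ⟨h1, h2⟩ := h
  rw [h2] at h1
  have h3 := wordPerm_inj n h2
  have h4 : σ = σ' := by
    ext1 x
    have := Equiv.congr_fun h3 (finRotate n x)
    simpa only [Equiv.trans_apply, Equiv.symm_apply_apply] using this
  rw [colSum_inj _ _ _ h1, h4]

theorem delta_succ (ℓ n : ℕ) (π : ColoredPerm ℓ n) (i : Fin n) (hi : (i : ℕ) + 1 < n) :
    (deltaMap ℓ n π).2 ⟨i + 1, hi⟩ = π.2 i := by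
  simp only [deltaMap, Equiv.trans_apply]
  congr 1
  rw [Equiv.symm_apply_eq]
  obtain ⟨n, rfl⟩ : ∃ m, n = m + 1 := ⟨n - 1, by omega⟩
  obtain ⟨i, hi'⟩ := i
  rw [finRotate_of_lt (by simp at hi; omega)]

theorem cSet_delta (ℓ n k : ℕ) (π : ColoredPerm ℓ n) :
    cSet ℓ n k (deltaMap ℓ n π) = cSet ℓ n (k + 1) π ∪
      {j | ∃ h0 : 0 < n, (deltaMap ℓ n π).2 ⟨0, h0⟩ = j ∧ (j : ℕ) = k ∧ π.1 j = 0} := by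
  ext j
  simp only [cSet, Set.mem_setOf_eq, Set.mem_union]
  constructor
  · rintro ⟨h1, ⟨i, hi⟩, h2, h3⟩
    rcases i with _ | i
    · right
      exact ⟨hi, h2, by simpa using h3, h1⟩
    · left
      refine ⟨h1, ⟨i, by omega⟩, ?_, by simp at h3 ⊢; omega⟩
      rw [← h2]
      exact (delta_succ ℓ n π ⟨i, by omega⟩ hi).symm
  · rintro (⟨h1, i, h2, h3⟩ | ⟨h0, h1, h2, h3⟩)
    · have hi : (i : ℕ) + 1 < n := by omega
      exact ⟨h1, ⟨i + 1, hi⟩, by rw [delta_succ, h2], by simp; omega⟩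
    · exact ⟨h3, ⟨0, h0⟩, h1, by simpa using h2⟩

theorem phi_a (ℓ n k : ℕ) (π : ColoredPerm ℓ n) :
    cSet ℓ n (k + 1) π = lSet ℓ n (k + 1) (phiMap ℓ n π) := by
  ext j
  simp only [cSet, lSet, Set.mem_setOf_eq, phiMap]
  set τ := wordPerm n (deltaMap ℓ n π).2 with hτ
  constructor
  · rintro ⟨h1, i, h2, h3⟩
    have hi : (i : ℕ) + 1 < n := by omega
    rw [← delta_succ ℓ n π i hi, wordPerm_next n _ i hi j (by omega)] at h2
    obtain ⟨m, hm, h4, h5⟩ := h2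
    rw [← hτ] at h4 h5
    refine ⟨m, hm, h4, by rw [h5]; exact h3, ?_⟩
    rw [← h4, colSum_succ, h4, h1, add_zero]
  · rintro ⟨m, hm, h4, h3, h1⟩
    refine ⟨?_, τ m, ?_, h3⟩
    · rw [← h4, colSum_succ, h4] at h1
      simpa using h1
    · have hi : (τ m : ℕ) + 1 < n := by omega
      rw [← delta_succ ℓ n π _ hi, wordPerm_next n _ _ hi j (by omega)]
      exact ⟨m, hm, h4, rfl⟩

/-- for `ℓ ≥ 1`, `n ≥ 1`, `k ≥ 0`, there is a bijection `Φ` of `G_{ℓ,n}`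
onto itself with `C^{k+1}(π) = L^{k+1}(Φ π)` and `C^k(δ π) = L^{*(k+1)}(Φ π)` for all `π`. -/
theorem stmt_7 (ℓ n k : ℕ) (hℓ : 1 ≤ ℓ) (hn : 1 ≤ n) :
    ∃ Φ : ColoredPerm ℓ n ≃ ColoredPerm ℓ n,
      ∀ π : ColoredPerm ℓ n,
        cSet ℓ n (k + 1) π = lSet ℓ n (k + 1) (Φ π) ∧
        cSet ℓ n k (deltaMap ℓ n π) = lstarSet ℓ n (k + 1) (Φ π) := by
  have : NeZero ℓ := ⟨by omega⟩
  refine ⟨Equiv.ofBijective (phiMap ℓ n)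
    (Finite.injective_iff_bijective.1 (phiMap_inj ℓ n)), fun π => ⟨phi_a ℓ n k π, ?_⟩⟩
  rw [cSet_delta, phi_a, Equiv.ofBijective_apply, lstarSet]
  congr 1
  ext j
  simp only [Set.mem_setOf_eq, phiMap]
  refine exists_congr fun h0 => ?_
  rw [wordPerm_zero]
  constructor
  · rintro ⟨h1, h2, h3⟩
    refine ⟨h1, by omega, ?_⟩
    rw [← h1, colSum_zero, h1, h3]
  · rintro ⟨h1, h2, h3⟩
    refine ⟨h1, by omega, ?_⟩
    rw [← h1, colSum_zero, h1] at h3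
    exact h3
end

section
/- Let ℓ ≥ 1, n ≥ 1, k ≥ 1 and m ≥ 0. Then the statistics c^k and l^k are equidistributed on G_{ℓ,n}: the number of colored permutations in G_{ℓ,n} with exactly m k-circular successions equals the number of colored permutations in G_{ℓ,n} with exactly m k-linear successions, i.e., c_{ℓ,n,m}^k = l_{ℓ,n,m}^k. -/
/-- The number `l^k(π)` of `k`-linear successions of `π = (ε, σ)` (for `k ≥ 1`):
positions `2 ≤ i ≤ n` with `σ i = σ (i−1) + k` and `ε (σ i) = ε (σ (i−1))`. -/
noncomputable def lsuccCount (ℓ n k : ℕ) (π : ColoredPerm ℓ n) : ℕ :=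
  Nat.card {i : Fin n // ∃ hi : (i : ℕ) + 1 < n,
    (π.2 ⟨(i : ℕ) + 1, hi⟩ : ℕ) = (π.2 i : ℕ) + k ∧
      π.1 (π.2 ⟨(i : ℕ) + 1, hi⟩) = π.1 (π.2 i)}

/-- `l_{ℓ,n,m}^k`: the number of `π ∈ G_{ℓ,n}` with exactly `m` `k`-linear successions. -/
noncomputable def lCount (ℓ n k m : ℕ) : ℕ :=
  Nat.card {π : ColoredPerm ℓ n // lsuccCount ℓ n k π = m}

namespace Succ8

/-- `x` is the base of a circular succession (`ρ` is the inverse permutation). -/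
def PC (ℓ k n : ℕ) (π : ColoredPerm ℓ n) (x : ℕ) : Prop :=
  ∃ h : x + k < n, (π.2 ⟨x + k, h⟩ : ℕ) = x ∧ π.1 ⟨x + k, h⟩ = 0

/-- `x` is the base of a linear succession (`ρ` is the inverse permutation). -/
def PL (ℓ k n : ℕ) (π : ColoredPerm ℓ n) (x : ℕ) : Prop :=
  ∃ h : x + k < n, (π.2 ⟨x + k, h⟩ : ℕ) = (π.2 ⟨x, by omega⟩ : ℕ) + 1 ∧
    π.1 ⟨x + k, h⟩ = π.1 ⟨x, by omega⟩

/-- Permutation from an injective function. -/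
noncomputable def mk {n : ℕ} (f : Fin n → Fin n) (hf : Function.Injective f) :
    Equiv.Perm (Fin n) :=
  Equiv.ofBijective f (Finite.injective_iff_bijective.1 hf)

/-- Values of the circular insertion. -/
def fC {n : ℕ} (ρ : Equiv.Perm (Fin n)) (o : Option (Fin n)) (y : Fin (n + 1)) : Fin (n + 1) :=
  if h : (y : ℕ) < n then
    (if o = some (ρ ⟨y, h⟩) then Fin.last n else (ρ ⟨y, h⟩).castSucc)
  else (match o with
    | none => Fin.last n
    | some i => i.castSucc)

/-- Position of the linear insertion. -/
def pos {n : ℕ} (ρ : Equiv.Perm (Fin n)) (o : Option (Fin n)) : ℕ :=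
  match o with
    | none => 0
    | some i => (ρ i : ℕ) + 1

lemma pos_le {n : ℕ} (ρ : Equiv.Perm (Fin n)) (o : Option (Fin n)) : pos ρ o < n + 1 := by
  cases o with
  | none => simp [pos]
  | some i => simp [pos]

/-- Values of the linear insertion. -/
def fL {n : ℕ} (ρ : Equiv.Perm (Fin n)) (o : Option (Fin n)) (y : Fin (n + 1)) : Fin (n + 1) :=
  if h : (y : ℕ) < n then
    (if (ρ ⟨y, h⟩ : ℕ) < pos ρ o then (ρ ⟨y, h⟩).castSucc else (ρ ⟨y, h⟩).succ)
  else ⟨pos ρ o, pos_le ρ o⟩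

lemma perm_val_inj {n : ℕ} (ρ : Equiv.Perm (Fin n)) (a b : Fin n)
    (h : (ρ a : ℕ) = ρ b) : (a : ℕ) = b := by
  rw [ρ.injective (Fin.ext h)]

lemma fC_inj {n : ℕ} (ρ : Equiv.Perm (Fin n)) (o : Option (Fin n)) :
    Function.Injective (fC ρ o) := by
  intro a b hab
  ext
  have ha := a.2
  have hb := b.2
  have key := fun h1 h2 => perm_val_inj ρ ⟨a, h1⟩ ⟨b, h2⟩
  unfold fC at hab
  rw [Fin.ext_iff] at hab
  cases o with
  | none =>
    split_ifs at hab with h1 h2 h3 h4 <;> simp at * <;> first | omega | skip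
    all_goals grind
  | some i =>
    simp only [Option.some.injEq, Fin.ext_iff] at hab
    split_ifs at hab with h1 h2 h3 h4 <;> simp at * <;> first | omega | skip
    all_goals grind

lemma fL_inj {n : ℕ} (ρ : Equiv.Perm (Fin n)) (o : Option (Fin n)) :
    Function.Injective (fL ρ o) := by
  intro a b hab
  ext
  have ha := a.2
  have hb := b.2
  have key := fun h1 h2 => perm_val_inj ρ ⟨a, h1⟩ ⟨b, h2⟩
  unfold fL at hab
  rw [Fin.ext_iff] at hab
  split_ifs at hab <;> simp at hab <;> first | omega | skip
  all_goals grind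

/-- Extend the coloring by one value. -/
def ext {ℓ n : ℕ} (ε : Fin n → ZMod ℓ) (c : ZMod ℓ) (y : Fin (n + 1)) : ZMod ℓ :=
  if h : (y : ℕ) < n then ε ⟨y, h⟩ else c

/-- Base color. -/
def base {ℓ n : ℕ} (ε : Fin n → ZMod ℓ) (o : Option (Fin n)) : ZMod ℓ :=
  match o with
    | none => 0
    | some i => ε i

/-- Circular insertion. -/
noncomputable def insC (ℓ n : ℕ) (t : ColoredPerm ℓ n × Option (Fin n) × ZMod ℓ) :
    ColoredPerm ℓ (n + 1) :=
  (ext t.1.1 t.2.2, mk (fC t.1.2 t.2.1) (fC_inj _ _))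

/-- Linear insertion. -/
noncomputable def insL (ℓ n : ℕ) (t : ColoredPerm ℓ n × Option (Fin n) × ZMod ℓ) :
    ColoredPerm ℓ (n + 1) :=
  (ext t.1.1 (t.2.2 + base t.1.1 t.2.1), mk (fL t.1.2 t.2.1) (fL_inj _ _))

lemma ext_inj {ℓ n : ℕ} {ε ε' : Fin n → ZMod ℓ} {c c' : ZMod ℓ} (h : ext ε c = ext ε' c') :
    ε = ε' ∧ c = c' := by
  constructor
  · funext i
    have := congrFun h i.castSucc
    simpa [ext] using this
  · have := congrFun h (Fin.last n)
    simpa [ext] using this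

lemma mk_inj {n : ℕ} {f g : Fin n → Fin n} {hf hg} (h : mk f hf = mk g hg) (y : Fin n) :
    (f y : ℕ) = g y := by
  have := congrArg (fun e : Equiv.Perm (Fin n) => e y) h
  simp only [mk, Equiv.ofBijective_apply] at this
  rw [this]

lemma insC_inj (ℓ n : ℕ) : Function.Injective (insC ℓ n) := by
  rintro ⟨⟨ε, ρ⟩, o, c⟩ ⟨⟨ε', ρ'⟩, o', c'⟩ h
  simp only [insC, Prod.mk.injEq] at h
  obtain ⟨h1, h2⟩ := h
  obtain ⟨rfl, rfl⟩ := ext_inj h1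
  have key := mk_inj h2
  have ho : o = o' := by
    have := key (Fin.last n)
    cases o with
    | none => cases o' with
      | none => rfl
      | some j => simp [fC] at this; omega
    | some i => cases o' with
      | none => simp [fC] at this; omega
      | some j => simp [fC] at this; rw [Fin.ext this]
  subst ho
  have hρ : ρ = ρ' := by
    ext y
    have := key y.castSucc
    simp [fC] at this
    have a := (ρ y).2
    have b := (ρ' y).2
    split_ifs at this with h1 h2
    · rw [h1] at h2; simp at h2; rw [h2]
    · simp at this; omega
    · simp at this; omega
    · simpa using this
  subst hρ
  rfl

lemma insL_inj (ℓ n : ℕ) : Function.Injective (insL ℓ n) := by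
  rintro ⟨⟨ε, ρ⟩, o, c⟩ ⟨⟨ε', ρ'⟩, o', c'⟩ h
  simp only [insL, Prod.mk.injEq] at h
  obtain ⟨h1, h2⟩ := h
  obtain ⟨rfl, h3⟩ := ext_inj h1
  have key := mk_inj h2
  have hp : pos ρ o = pos ρ' o' := by
    have := key (Fin.last n)
    simpa [fL] using this
  have hρ : ρ = ρ' := by
    ext y
    have := key y.castSucc
    simp [fL, hp] at this
    split_ifs at this <;> simp at this <;> omega
  subst hρ
  have ho : o = o' := by
    cases o with
    | none => cases o' with
      | none => rfl
      | some j => simp [pos] at hp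
    | some i => cases o' with
      | none => simp [pos] at hp
      | some j =>
        simp [pos] at hp
        rw [Fin.ext (perm_val_inj ρ i j (by omega))]
  subst ho
  simp at h3
  subst h3
  rfl

lemma bij_of_inj (ℓ n : ℕ) [NeZero ℓ]
    (f : ColoredPerm ℓ n × Option (Fin n) × ZMod ℓ → ColoredPerm ℓ (n + 1))
    (hf : Function.Injective f) : Function.Bijective f := by
  rw [Fintype.bijective_iff_injective_and_card]
  refine ⟨hf, ?_⟩
  simp [ZMod.card, Fintype.card_perm, Nat.factorial_succ, pow_succ]
  ring

/-- Common recursion. -/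
def step {ℓ : ℕ} (k n : ℕ) (P : ℕ → Prop) (o : Option (Fin n)) (c : ZMod ℓ) (x : ℕ) : Prop :=
  (P x ∧ ∀ i : Fin n, o = some i → (i : ℕ) ≠ x) ∨
    (x + k = n ∧ c = 0 ∧ ∃ i : Fin n, o = some i ∧ (i : ℕ) = x)

lemma insC_step (ℓ k n : ℕ) (hk : 1 ≤ k) (t : ColoredPerm ℓ n × Option (Fin n) × ZMod ℓ) (x : ℕ) :
    PC ℓ k (n + 1) (insC ℓ n t) x ↔ step k n (PC ℓ k n t.1) t.2.1 t.2.2 x := by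
  obtain ⟨⟨ε, ρ⟩, o, c⟩ := t
  rcases lt_trichotomy (x + k) n with h | h | h
  · have h' : x + k < n + 1 := by omega
    have hne : x + k ≠ n := by omega
    simp only [PC, step, insC, ext, mk, Equiv.ofBijective_apply, fC, h, h', hne, exists_true_left,
      dif_pos, false_and, or_false]
    cases o with
    | none => simp
    | some i =>
      simp only [Option.some.injEq, forall_eq']
      split_ifs with h1
      · subst h1; simp; omega
      · simp
        rw [Fin.ext_iff] at h1
        omega
  · have h' : x + k < n + 1 := by omega
    have hne : ¬ x + k < n := by omega
    simp only [PC, step, insC, ext, mk, Equiv.ofBijective_apply, fC, h', hne, exists_true_left,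
      dif_neg, not_false_eq_true]
    cases o with
    | none => simp; omega
    | some i => simp [h]; tauto
  · have h1 : ¬ x + k < n + 1 := by omega
    have h2 : ¬ x + k < n := by omega
    have h3 : x + k ≠ n := by omega
    simp [PC, step, h1, h2, h3]

lemma insL_step (ℓ k n : ℕ) (hk : 1 ≤ k) (t : ColoredPerm ℓ n × Option (Fin n) × ZMod ℓ) (x : ℕ) :
    PL ℓ k (n + 1) (insL ℓ n t) x ↔ step k n (PL ℓ k n t.1) t.2.1 t.2.2 x := by
  obtain ⟨⟨ε, ρ⟩, o, c⟩ := t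
  rcases lt_trichotomy (x + k) n with h | h | h
  · have h' : x + k < n + 1 := by omega
    have hne : x + k ≠ n := by omega
    have hx : x < n := by omega
    simp only [PL, step, insL, ext, mk, Equiv.ofBijective_apply, fL, h, h', hne, hx,
      exists_true_left, dif_pos, false_and, or_false]
    rw [and_right_comm]
    refine and_congr_left fun _ => ?_
    cases o with
    | none => simp [pos]
    | some i =>
      simp only [Option.some.injEq, forall_eq']
      have hp : pos ρ (some i) = (ρ i : ℕ) + 1 := rfl
      have key := perm_val_inj ρ i ⟨x, hx⟩
      have key2 : (i : ℕ) = x → (ρ i : ℕ) = ρ ⟨x, hx⟩ := by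
        rintro rfl; rfl
      simp only at key
      simp only [apply_ite Fin.val, Fin.val_castSucc, Fin.val_succ]
      repeat' split
      all_goals omega
  · have h' : x + k < n + 1 := by omega
    have hne : ¬ x + k < n := by omega
    have hx : x < n := by omega
    simp only [PL, step, insL, ext, mk, Equiv.ofBijective_apply, fL, h', hne, hx,
      exists_true_left, dif_neg, dif_pos, not_false_eq_true]
    cases o with
    | none => simp [pos]
    | some i =>
      have key := perm_val_inj ρ i ⟨x, hx⟩
      simp only at key
      have hp : pos ρ (some i) = (ρ i : ℕ) + 1 := rfl
      simp only [base, IsEmpty.exists_iff, false_and, false_or, h, true_and,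
        Option.some.injEq, exists_eq_left']
      constructor
      · rintro ⟨a, b⟩
        have hi : (i : ℕ) = x := by
          apply key
          simp only [apply_ite Fin.val, Fin.val_castSucc, Fin.val_succ] at a
          split at a <;> omega
        subst hi
        simpa using b
      · rintro ⟨rfl, rfl⟩
        simp [hp]
  · have h1 : ¬ x + k < n + 1 := by omega
    have h2 : ¬ x + k < n := by omega
    have h3 : x + k ≠ n := by omega
    simp [PL, step, h1, h2, h3]

lemma exists_equiv (ℓ k : ℕ) [NeZero ℓ] (hk : 1 ≤ k) (n : ℕ) :
    ∃ e : ColoredPerm ℓ n ≃ ColoredPerm ℓ n, ∀ π x, PC ℓ k n π x ↔ PL ℓ k n (e π) x := by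
  induction n with
  | zero => exact ⟨Equiv.refl _, fun π x => by simp [PC, PL]⟩
  | succ n ih =>
    obtain ⟨e, he⟩ := ih
    let A := Equiv.ofBijective _ (bij_of_inj ℓ n _ (insC_inj ℓ n))
    let B := Equiv.ofBijective _ (bij_of_inj ℓ n _ (insL_inj ℓ n))
    refine ⟨A.symm.trans ((e.prodCongr (Equiv.refl _)).trans B), fun π x => ?_⟩
    obtain ⟨t, rfl⟩ := A.surjective π
    have h1 : A t = insC ℓ n t := rfl
    have h2 : ∀ s, B s = insL ℓ n s := fun s => rfl
    simp only [Equiv.trans_apply, Equiv.symm_apply_apply, h2]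
    rw [h1, insC_step ℓ k n hk, insL_step ℓ k n hk]
    simp [step, he]

lemma csucc_eq (ℓ n k : ℕ) (ε : Fin n → ZMod ℓ) (σ : Equiv.Perm (Fin n)) :
    csuccCount ℓ n k (ε, σ) = Nat.card {x // PC ℓ k n (ε, σ⁻¹) x} := by
  unfold csuccCount
  have hσ : ∀ (i : Fin n) (h : (i : ℕ) + k < n), (σ i : ℕ) = i + k → σ i = ⟨i + k, h⟩ :=
    fun i h e => Fin.ext e
  refine Nat.card_eq_of_bijective (fun i => ⟨(i.1 : ℕ), ?_⟩) ⟨?_, ?_⟩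
  · obtain ⟨i, hi, hc⟩ := i
    have h : (i : ℕ) + k < n := by rw [← hi]; exact (σ i).2
    refine ⟨h, ?_, ?_⟩
    · simp only [← hσ i h hi]; simp
    · simp only [← hσ i h hi]; exact hc
  · rintro ⟨i, _⟩ ⟨j, _⟩ h
    simpa [Fin.ext_iff] using h
  · rintro ⟨x, h, h1, h2⟩
    have e : σ ⟨x, by omega⟩ = ⟨x + k, h⟩ := by
      rw [← Equiv.Perm.eq_inv_iff_eq]
      exact Fin.ext h1.symm
    exact ⟨⟨⟨x, by omega⟩, by simp [e], by simpa [e] using h2⟩, rfl⟩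

lemma lsucc_eq (ℓ n k : ℕ) (ε : Fin n → ZMod ℓ) (σ : Equiv.Perm (Fin n)) :
    lsuccCount ℓ n k (ε, σ) = Nat.card {x // PL ℓ k n (ε, σ⁻¹) x} := by
  unfold lsuccCount
  refine Nat.card_eq_of_bijective (fun i => ⟨(σ i.1 : ℕ), ?_⟩) ⟨?_, ?_⟩
  · obtain ⟨i, hi, h1, h2⟩ := i
    simp only at h1 h2
    have h : (σ i : ℕ) + k < n := by rw [← h1]; exact (σ _).2
    have e : σ ⟨i + 1, hi⟩ = ⟨(σ i : ℕ) + k, h⟩ := Fin.ext h1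
    refine ⟨h, ?_, ?_⟩
    · simp only [← e]; simp
    · simp only [← e]; exact h2
  · rintro ⟨i, _⟩ ⟨j, _⟩ h
    simp only [Subtype.mk.injEq] at h ⊢
    exact Fin.ext (perm_val_inj σ i j h)
  · rintro ⟨x, h, h1, h2⟩
    have hx : x < n := by omega
    simp only at h1 h2
    have hlt : (σ⁻¹ ⟨x, hx⟩ : Fin n).1 + 1 < n := by
      rw [← h1]; exact (σ⁻¹ _).2
    have e : σ ⟨(σ⁻¹ ⟨x, hx⟩ : Fin n).1 + 1, hlt⟩ = ⟨x + k, h⟩ := by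
      rw [← Equiv.Perm.eq_inv_iff_eq]
      exact Fin.ext h1.symm
    refine ⟨⟨σ⁻¹ ⟨x, hx⟩, hlt, ?_, ?_⟩, ?_⟩
    · simp only [e]; simp
    · simp only [e]; simpa using h2
    · simp

end Succ8

open Succ8 in
/-- for `ℓ ≥ 1`, `n ≥ 1`, `k ≥ 1`, `m ≥ 0`, the statistics `c^k` and `l^k`
are equidistributed on `G_{ℓ,n}`: `c_{ℓ,n,m}^k = l_{ℓ,n,m}^k`. -/
theorem stmt_8 (ℓ n k m : ℕ) (hℓ : 1 ≤ ℓ) (hn : 1 ≤ n) (hk : 1 ≤ k) :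
    cCount ℓ n k m = lCount ℓ n k m := by
  haveI : NeZero ℓ := ⟨by omega⟩
  obtain ⟨e, he⟩ := exists_equiv ℓ k hk n
  let I : ColoredPerm ℓ n ≃ ColoredPerm ℓ n :=
    (Equiv.refl _).prodCongr (Equiv.inv (Equiv.Perm (Fin n)))
  have hc : ∀ π, csuccCount ℓ n k π = Nat.card {x // PC ℓ k n (I π) x} :=
    fun π => csucc_eq ℓ n k π.1 π.2
  have hl : ∀ π, lsuccCount ℓ n k π = Nat.card {x // PL ℓ k n (I π) x} :=
    fun π => lsucc_eq ℓ n k π.1 π.2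
  unfold cCount lCount
  refine Nat.card_congr ((I.trans (e.trans I.symm)).subtypeEquiv fun π => ?_)
  rw [hc, hl]
  simp only [Equiv.trans_apply, Equiv.apply_symm_apply, he]
end

section
/- Let ℓ ≥ 1 and 0 ≤ m ≤ n. Then g_{ℓ,n}^m = ℓ^m · m! · d_{ℓ,n}^m; in particular, ℓ^m · m! divides g_{ℓ,n}^m. -/
/-- for `ℓ ≥ 1` and `0 ≤ m ≤ n`, `g_{ℓ,n}^m = ℓ^m · m! · d_{ℓ,n}^m`;
in particular `ℓ^m · m!` divides `g_{ℓ,n}^m`.  Here `g` is Euler's difference table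
(`g n n = ℓ^n n!`, `g n m = g n (m+1) − g (n−1) m`) and `d` is the allied array
(`d n n = 1`, `d n m = ℓ(m+1) d n (m+1) − d (n−1) m`). -/
theorem stmt_10 (ℓ : ℕ) (hℓ : 1 ≤ ℓ) (g d : ℕ → ℕ → ℤ)
    (hg_diag : ∀ n : ℕ, g n n = (ℓ : ℤ) ^ n * (Nat.factorial n : ℤ))
    (hg_rec : ∀ n m : ℕ, m < n → g n m = g n (m + 1) - g (n - 1) m)
    (hd_diag : ∀ n : ℕ, d n n = 1)
    (hd_rec : ∀ n m : ℕ, m < n →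
      d n m = (ℓ : ℤ) * ((m : ℤ) + 1) * d n (m + 1) - d (n - 1) m)
    (m n : ℕ) (hmn : m ≤ n) :
    g n m = (ℓ : ℤ) ^ m * (Nat.factorial m : ℤ) * d n m ∧
      ((ℓ : ℤ) ^ m * (Nat.factorial m : ℤ)) ∣ g n m := by
  have key : ∀ k m : ℕ,
      g (m + k) m = (ℓ : ℤ) ^ m * (Nat.factorial m : ℤ) * d (m + k) m := by
    intro k
    induction k with
    | zero => intro m; simp [hg_diag, hd_diag]
    | succ k ih =>
      intro m
      have h1 := ih (m + 1)
      have h2 := ih m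
      have e : m + 1 + k = m + (k + 1) := by omega
      have e' : m + (k + 1) - 1 = m + k := by omega
      rw [e] at h1
      rw [hg_rec _ m (by omega), hd_rec _ m (by omega), e', h1, h2, Nat.factorial_succ]
      push_cast
      ring
  have h := key (n - m) m
  rw [Nat.add_sub_cancel' hmn] at h
  exact ⟨h, _, h⟩
end

section
/- Let ℓ ≥ 1 and 0 ≤ m ≤ n. Then d_{ℓ,n}^m equals the number of m-increasing-fixed colored permutations in G_{ℓ,n}, i.e., the cardinality of I_{ℓ,n}^m. -/
/-- `π = (ε, σ)` is `m`-increasing-fixed if (i) the values `π(1),…,π(m)` are uncolored,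
(ii) all fixed points of `π` lie in `[m]`, and (iii) `σ(1) < σ(2) < ⋯ < σ(m)`. -/
def IncreasingFixed (ℓ n m : ℕ) (π : ColoredPerm ℓ n) : Prop :=
  (∀ i : Fin n, (i : ℕ) < m → π.1 (π.2 i) = 0) ∧
  (∀ i : Fin n, (π.2 i = i ∧ π.1 i = 0) → (i : ℕ) < m) ∧
  (∀ i j : Fin n, (i : ℕ) < (j : ℕ) → (j : ℕ) < m → (π.2 i : ℕ) < (π.2 j : ℕ))

/-- Auxiliary predicate: colors vanish on `p`, no fixed points outside `p`. -/
def AuxGood {Z α : Type} [Zero Z] (p : α → Prop) (x : (α → Z) × Equiv.Perm α) : Prop :=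
  (∀ i, p i → x.1 i = 0) ∧ ∀ i, ¬ p i → ¬ (x.2 i = i ∧ x.1 i = 0)

theorem aux_transport {Z α β : Type} [Zero Z] (e : α ≃ β) (p : α → Prop) (q : β → Prop)
    (h : ∀ a, p a ↔ q (e a)) :
    Nat.card {x : (α → Z) × Equiv.Perm α // AuxGood p x} =
      Nat.card {x : (β → Z) × Equiv.Perm β // AuxGood q x} := by
  refine Nat.card_congr (Equiv.subtypeEquiv
    (Equiv.prodCongr (e.arrowCongr (Equiv.refl Z)) e.permCongr) ?_)
  rintro ⟨f, s⟩
  simp only [AuxGood]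
  refine and_congr ?_ ?_
  · rw [← e.forall_congr_right]
    simp [h]
  · rw [← e.forall_congr_right (q := fun b => ¬ q b → _)]
    simp [h]

/-- Extend a predicate to `Option`. -/
def auxExt {α : Type} (p : α → Prop) (b : Prop) : Option α → Prop
  | none => b
  | some a => p a

theorem aux_rec {Z α : Type} [Zero Z] [Finite Z] [Finite α] (p : α → Prop) :
    Nat.card {x : (Option α → Z) × Equiv.Perm (Option α) // AuxGood (auxExt p False) x} +
      Nat.card {x : (α → Z) × Equiv.Perm α // AuxGood p x} =
    Nat.card Z *
      Nat.card {x : (Option α → Z) × Equiv.Perm (Option α) // AuxGood (auxExt p True) x} := by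
  classical
  let T : (Option α → Z) × Equiv.Perm (Option α) → Prop := fun x =>
    (∀ i, p i → x.1 (some i) = 0) ∧ ∀ i, ¬ p i → ¬ (x.2 (some i) = some i ∧ x.1 (some i) = 0)
  let F : (Option α → Z) × Equiv.Perm (Option α) → Prop := fun x =>
    x.2 none = none ∧ x.1 none = 0
  have h1 : Nat.card {x // T x} = Nat.card Z *
      Nat.card {x : (Option α → Z) × Equiv.Perm (Option α) // AuxGood (auxExt p True) x} := by
    rw [← Nat.card_prod]
    symm
    refine Nat.card_congr (Equiv.ofBijective
      (fun y => ⟨(fun o => o.elim y.1 (fun a => y.2.1.1 (some a)), y.2.1.2), ?_⟩) ⟨?_, ?_⟩)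
    · obtain ⟨c, ⟨f, s⟩, hx⟩ := y
      exact ⟨fun i hi => hx.1 (some i) hi, fun i hi => hx.2 (some i) hi⟩
    · rintro ⟨c, ⟨f, s⟩, hx⟩ ⟨c', ⟨f', s'⟩, hx'⟩ h
      simp only [Subtype.mk.injEq, Prod.mk.injEq] at h
      obtain ⟨h, rfl⟩ := h
      have hc : c = c' := congrFun h none
      have hf : f = f' := by
        funext o
        cases o with
        | none => exact (hx.1 none trivial).trans (hx'.1 none trivial).symm
        | some a => exact congrFun h (some a)
      subst hc hf
      rfl
    · rintro ⟨⟨f, s⟩, hx⟩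
      refine ⟨⟨f none, ⟨(fun o => o.elim 0 (fun a => f (some a)), s), ?_, ?_⟩⟩, ?_⟩
      · rintro (_ | a) h
        · rfl
        · exact hx.1 a h
      · rintro (_ | a) h
        · exact absurd trivial h
        · exact hx.2 a h
      · apply Subtype.ext
        refine Prod.ext ?_ rfl
        funext o
        cases o <;> rfl
  have h2 : Nat.card {x // T x} = Nat.card {x // T x ∧ ¬ F x} + Nat.card {x // T x ∧ F x} := by
    rw [← Nat.card_congr (Equiv.subtypeSubtypeEquivSubtypeInter T F),
      ← Nat.card_congr (Equiv.subtypeSubtypeEquivSubtypeInter T (fun x => ¬ F x)), add_comm,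
      ← Nat.card_sum]
    exact Nat.card_congr (Equiv.sumCompl (fun x : {x // T x} => F x.1)).symm
  have h3 : Nat.card {x // T x ∧ ¬ F x} =
      Nat.card {x : (Option α → Z) × Equiv.Perm (Option α) // AuxGood (auxExt p False) x} := by
    refine Nat.card_congr (Equiv.subtypeEquivRight ?_)
    intro x
    simp only [AuxGood, T, F, Option.forall, auxExt]
    tauto
  have h4 : Nat.card {x // T x ∧ F x} = Nat.card {x : (α → Z) × Equiv.Perm α // AuxGood p x} := by
    symm
    refine Nat.card_congr (Equiv.ofBijective
      (fun y => ⟨(fun o => o.elim 0 y.1.1, Equiv.optionCongr y.1.2), ?_⟩) ⟨?_, ?_⟩)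
    · obtain ⟨⟨f, s⟩, hx⟩ := y
      refine ⟨⟨fun i hi => hx.1 i hi, fun i hi => ?_⟩, ?_⟩
      · simpa using hx.2 i hi
      · simp [F]
    · rintro ⟨⟨f, s⟩, hx⟩ ⟨⟨f', s'⟩, hx'⟩ h
      simp only [Subtype.mk.injEq, Prod.mk.injEq] at h
      have hs := Equiv.optionCongr_injective h.2
      have hf : f = f' := by
        funext a
        exact congrFun h.1 (some a)
      subst hs hf
      rfl
    · rintro ⟨⟨f, s⟩, hx, hs, hf⟩
      have hss : Equiv.optionCongr (Equiv.removeNone s) = s := by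
        ext1 o
        cases o with
        | none => simpa using hs.symm
        | some a =>
          simp only [Equiv.optionCongr_apply, Option.map_some]
          refine Equiv.removeNone_some s ?_
          refine Option.ne_none_iff_exists'.1 fun h0 => ?_
          have := s.injective (h0.trans hs.symm)
          simp at this
      refine ⟨⟨(fun a => f (some a), Equiv.removeNone s), ?_, ?_⟩, ?_⟩
      · exact hx.1
      · intro i hi h
        refine hx.2 i hi ⟨?_, h.2⟩
        have h5 := congrArg (fun u : Equiv.Perm (Option α) => u (some i)) hss
        simp only [Equiv.optionCongr_apply, Option.map_some] at h5
        rw [← h5]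
        exact congrArg some h.1
      · apply Subtype.ext
        refine Prod.ext ?_ hss
        funext o
        cases o
        · exact hf.symm
        · rfl
  omega

/-- Count for `[m]` inside `[n]`. -/
noncomputable def auxA (Z : Type) [Zero Z] (n m : ℕ) : ℕ :=
  Nat.card {x : (Fin n → Z) × Equiv.Perm (Fin n) // AuxGood (fun i : Fin n => (i : ℕ) < m) x}

theorem auxA_rec (Z : Type) [Zero Z] [Finite Z] (n m : ℕ) (h : m ≤ n) :
    auxA Z (n + 1) m + auxA Z n m = Nat.card Z * auxA Z (n + 1) (m + 1) := by
  have key : ∀ (b : Prop) (k : ℕ), (b ↔ m < k) → (k = m ∨ k = m + 1) →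
      auxA Z (n + 1) k = Nat.card {x : (Option (Fin n) → Z) × Equiv.Perm (Option (Fin n)) //
        AuxGood (auxExt (fun i : Fin n => (i : ℕ) < m) b) x} := by
    intro b k hb hk
    refine aux_transport (finSuccEquiv' (⟨m, by omega⟩ : Fin (n + 1))) _ _ ?_
    rw [← (finSuccEquiv' (⟨m, by omega⟩ : Fin (n + 1))).symm.forall_congr_right]
    rintro (_ | a)
    · simp [auxExt, hb]
    · rw [Equiv.apply_symm_apply]
      simp only [auxExt, finSuccEquiv'_symm_some, Fin.succAbove,
        Fin.lt_def, Fin.val_castSucc]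
      split_ifs <;> simp <;> omega
  rw [key False m (by simp) (by simp), key True (m + 1) (by simp) (by simp)]
  exact aux_rec _

theorem auxA_diag (Z : Type) [Zero Z] (n : ℕ) : auxA Z n n = n.factorial := by
  rw [auxA, show n.factorial = Nat.card (Equiv.Perm (Fin n)) by
    simp [Nat.card_eq_fintype_card, Fintype.card_perm]]
  refine Nat.card_congr (Equiv.ofBijective (fun x => x.1.2) ⟨?_, ?_⟩)
  · rintro ⟨⟨f, s⟩, hx⟩ ⟨⟨f', s'⟩, hx'⟩ h
    apply Subtype.ext
    refine Prod.ext ?_ h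
    funext i
    exact (hx.1 i i.2).trans (hx'.1 i i.2).symm
  · intro s
    exact ⟨⟨(fun _ => 0, s), fun _ _ => rfl, fun i hi => absurd i.2 hi⟩, rfl⟩

/-- `[m]` as a subtype of `Fin n`. -/
def auxSub {n m : ℕ} (h : m ≤ n) : Fin m ≃ {i : Fin n // (i : ℕ) < m} where
  toFun i := ⟨⟨i, by omega⟩, i.2⟩
  invFun i := ⟨i.1, i.2⟩
  left_inv _ := rfl
  right_inv _ := rfl

/-- Increasing on `[m]`. -/
def AuxInc {n : ℕ} (m : ℕ) (s : Equiv.Perm (Fin n)) : Prop :=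
  ∀ i j : Fin n, (i : ℕ) < (j : ℕ) → (j : ℕ) < m → (s i : ℕ) < (s j : ℕ)

theorem aux_sort (Z : Type) [Zero Z] (n m : ℕ) (h : m ≤ n) :
    auxA Z n m = m.factorial * Nat.card {x : (Fin n → Z) × Equiv.Perm (Fin n) //
      AuxGood (fun i : Fin n => (i : ℕ) < m) x ∧ AuxInc m x.2} := by
  rw [show m.factorial = Nat.card (Equiv.Perm (Fin m)) by
    simp [Nat.card_eq_fintype_card, Fintype.card_perm], ← Nat.card_prod]
  symm
  have hge : ∀ (t : Equiv.Perm (Fin m)) (i : Fin n), ¬ (i : ℕ) < m →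
      t.extendDomain (auxSub h) i = i := fun t i hi =>
    Equiv.Perm.extendDomain_apply_not_subtype _ _ hi
  have hlt : ∀ (t : Equiv.Perm (Fin m)) (i : Fin m),
      t.extendDomain (auxSub h) (Fin.castLE h i) = Fin.castLE h (t i) := fun t i =>
    Equiv.Perm.extendDomain_apply_image t (auxSub h) i
  have hgood : ∀ (f : Fin n → Z) (s : Equiv.Perm (Fin n)) (t : Equiv.Perm (Fin m)),
      AuxGood (fun i : Fin n => (i : ℕ) < m) (f, s) →
      AuxGood (fun i : Fin n => (i : ℕ) < m) (f, s * t.extendDomain (auxSub h)) := by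
    intro f s t hx
    refine ⟨hx.1, fun i hi hh => hx.2 i hi ⟨?_, hh.2⟩⟩
    have := hh.1
    simpa [hge t i hi] using this
  have hmono : ∀ s : Equiv.Perm (Fin n), AuxInc m s → StrictMono (s ∘ Fin.castLE h) := by
    intro s hs i j hij
    exact hs (Fin.castLE h i) (Fin.castLE h j) hij j.2
  refine Nat.card_congr (Equiv.ofBijective
      (fun y => ⟨(y.2.1.1, y.2.1.2 * y.1.extendDomain (auxSub h)), hgood _ _ _ y.2.2.1⟩) ⟨?_, ?_⟩)
  · rintro ⟨t, ⟨f, s⟩, hx, hs⟩ ⟨t', ⟨f', s'⟩, hx', hs'⟩ hh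
    simp only [Subtype.mk.injEq, Prod.mk.injEq] at hh
    obtain ⟨rfl, hh⟩ := hh
    have e1 : (s ∘ Fin.castLE h) ∘ t = (s' ∘ Fin.castLE h) ∘ t' := by
      funext i
      have := congrArg (fun u : Equiv.Perm (Fin n) => u (Fin.castLE h i)) hh
      simpa [hlt] using this
    have e2 : s ∘ Fin.castLE h = s' ∘ Fin.castLE h := by
      rw [← StrictMono.range_inj (hmono s hs) (hmono s' hs'), ← t.surjective.range_comp, e1,
        t'.surjective.range_comp]
    have e3 : t = t' := by
      ext1 i
      have := congrFun e1 i
      rw [← e2] at this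
      exact (hmono s hs).injective this
    subst e3
    have e4 : s = s' := mul_right_cancel hh
    subst e4
    rfl
  · rintro ⟨⟨f, s⟩, hx⟩
    let t := Tuple.sort (s ∘ Fin.castLE h)
    have ht : Monotone ((s ∘ Fin.castLE h) ∘ t) := Tuple.monotone_sort _
    refine ⟨⟨t⁻¹, ⟨(f, s * t.extendDomain (auxSub h)), hgood _ _ _ hx, ?_⟩⟩, ?_⟩
    · intro i j hij hj
      have h1 := (ht.strictMono_of_injective ((s.injective.comp
        (Fin.castLE_injective h)).comp t.injective))
        (show (⟨i, by omega⟩ : Fin m) < ⟨j, hj⟩ from hij)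
      have h2 := hlt t ⟨i, by omega⟩
      have h3 := hlt t ⟨j, hj⟩
      simp only [Function.comp] at h1
      rw [← h2, ← h3] at h1
      exact h1
    · apply Subtype.ext
      refine Prod.ext rfl ?_
      simp only [mul_assoc, Equiv.Perm.extendDomain_mul, mul_inv_cancel,
        Equiv.Perm.extendDomain_one, mul_one]

theorem aux_card (ℓ n m : ℕ) :
    Nat.card {π : ColoredPerm ℓ n // IncreasingFixed ℓ n m π} =
    Nat.card {x : (Fin n → ZMod ℓ) × Equiv.Perm (Fin n) //
      AuxGood (fun i : Fin n => (i : ℕ) < m) x ∧ AuxInc m x.2} := by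
  let e : ColoredPerm ℓ n ≃ ColoredPerm ℓ n :=
    { toFun := fun x => (x.1 ∘ x.2, x.2)
      invFun := fun x => (x.1 ∘ x.2.symm, x.2)
      left_inv := by
        rintro ⟨f, s⟩
        refine Prod.ext ?_ rfl
        funext i
        simp
      right_inv := by
        rintro ⟨f, s⟩
        refine Prod.ext ?_ rfl
        funext i
        simp }
  refine Nat.card_congr (Equiv.subtypeEquiv e ?_)
  rintro ⟨f, s⟩
  simp only [IncreasingFixed, AuxGood, AuxInc, e, Equiv.coe_fn_mk, Function.comp]
  rw [and_assoc]
  refine and_congr Iff.rfl (and_congr (forall_congr' fun i => ?_) Iff.rfl)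
  constructor
  · rintro h h1 ⟨h2, h3⟩
    rw [h2] at h3
    exact h1 (h ⟨h2, h3⟩)
  · rintro h ⟨h2, h3⟩
    by_contra h1
    exact h h1 ⟨h2, by rw [h2]; exact h3⟩

/-- for `ℓ ≥ 1` and `0 ≤ m ≤ n`, the entry `d_{ℓ,n}^m` of the allied array
(`d n n = 1`, `d n m = ℓ(m+1) d n (m+1) − d (n−1) m`) equals the number of
`m`-increasing-fixed colored permutations in `G_{ℓ,n}`. -/
theorem stmt_11 (ℓ : ℕ) (hℓ : 1 ≤ ℓ) (d : ℕ → ℕ → ℤ)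
    (hd_diag : ∀ n : ℕ, d n n = 1)
    (hd_rec : ∀ n m : ℕ, m < n →
      d n m = (ℓ : ℤ) * ((m : ℤ) + 1) * d n (m + 1) - d (n - 1) m)
    (m n : ℕ) (hmn : m ≤ n) :
    d n m = Nat.card {π : ColoredPerm ℓ n // IncreasingFixed ℓ n m π} := by
  haveI : NeZero ℓ := ⟨by omega⟩
  have key : ∀ n m : ℕ, m ≤ n → (m.factorial : ℤ) * d n m = auxA (ZMod ℓ) n m := by
    intro n
    induction n with
    | zero =>
      intro m hm
      obtain rfl : m = 0 := by omega
      rw [auxA_diag, hd_diag]; simp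
    | succ n ih =>
      intro m hm
      induction hm using Nat.decreasingInduction with
      | self => rw [auxA_diag, hd_diag]; simp
      | of_succ k hk ih2 =>
        have h1 := auxA_rec (ZMod ℓ) n k (by omega)
        have h2 := ih k (by omega)
        rw [Nat.card_zmod] at h1
        zify at h1
        rw [← ih2, ← h2, Nat.factorial_succ] at h1
        rw [hd_rec _ _ hk, Nat.add_sub_cancel]
        push_cast at h1
        linear_combination -h1
  have h1 := key n m hmn
  rw [aux_sort _ _ _ hmn, ← aux_card] at h1
  push_cast at h1
  exact mul_left_cancel₀ (by exact_mod_cast m.factorial_ne_zero) h1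
end

section
/- Let ℓ ≥ 1 and 0 ≤ m ≤ n. Then d_{ℓ,n}^m equals the number of m-isolated-fixed colored permutations in G_{ℓ,n}, i.e., the cardinality of D_{ℓ,n}^m. -/
/-- `π = (ε, σ)` is `m`-isolated-fixed if (i) `ε(i) = 0` for every `i ∈ [m]`,
(ii) all fixed points of `π` lie in `[m]`, and (iii) each cycle of `σ` contains at most
one element of `[m]`. -/
def IsolatedFixed (ℓ n m : ℕ) (π : ColoredPerm ℓ n) : Prop :=
  (∀ i : Fin n, (i : ℕ) < m → π.1 i = 0) ∧
  (∀ i : Fin n, (π.2 i = i ∧ π.1 i = 0) → (i : ℕ) < m) ∧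
  (∀ i j : Fin n, (i : ℕ) < m → (j : ℕ) < m → π.2.SameCycle i j → i = j)


open Equiv Equiv.Perm

lemma inv_of_sameCycle {α β : Type*} (σ : Perm α) (f : α → β) (h : ∀ i, f (σ i) = f i)
    {i j : α} (hs : σ.SameCycle i j) : f i = f j := by
  obtain ⟨k, rfl⟩ := hs
  induction k with
  | zero => simp
  | succ k ih =>
    rw [add_comm, zpow_add, zpow_one, Perm.mul_apply, h]; exact ih
  | pred k ih =>
    rw [← h ((σ ^ (-(k : ℤ) - 1)) i), ← Perm.mul_apply, ← zpow_one_add]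
    rw [ih]; congr 3; ring

lemma sameCycle_merge {α : Type*} [Fintype α] [DecidableEq α] (σ : Perm α) {a x : α}
    (h : ¬ σ.SameCycle a x) : (σ * swap a x).SameCycle a x := by
  have key : ∀ k : ℕ, (σ * swap a x).SameCycle a ((σ ^ (k+1)) x) := by
    intro k
    induction k with
    | zero => exact ⟨1, by simp⟩
    | succ k ih =>
      rw [pow_succ', Perm.mul_apply]
      by_cases hx : (σ ^ (k+1)) x = x
      · rw [hx]; exact ⟨1, by simp⟩
      · have ha : (σ ^ (k+1)) x ≠ a := fun e => h (SameCycle.symm ⟨(k+1 : ℕ), by rw [zpow_natCast]; exact e⟩)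
        have : σ ((σ ^ (k+1)) x) = (σ * swap a x) ((σ ^ (k+1)) x) := by
          rw [Perm.mul_apply, swap_apply_of_ne_of_ne ha hx]
        rw [this, sameCycle_apply_right]; exact ih
  have := key (orderOf σ - 1)
  rwa [Nat.sub_add_cancel (orderOf_pos σ), pow_orderOf_eq_one, Perm.one_apply] at this

lemma sameCycle_of_split {α : Type*} [DecidableEq α] (σ : Perm α) {a x : α}
    (h : σ.SameCycle a x) {i j : α} (hs : (σ * swap a x).SameCycle i j) : σ.SameCycle i j := by
  have := inv_of_sameCycle (σ * swap a x) (fun i => (Quotient.mk (SameCycle.setoid σ) i)) ?_ hs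
  · exact Quotient.exact this
  · intro i
    apply Quotient.sound
    show σ.SameCycle _ _
    rw [Perm.mul_apply, sameCycle_apply_left]
    rcases eq_or_ne i a with rfl | ha
    · rw [swap_apply_left]; exact h.symm
    rcases eq_or_ne i x with rfl | hx
    · rw [swap_apply_right]; exact h
    rw [swap_apply_of_ne_of_ne ha hx]

lemma not_sameCycle_split {α : Type*} [Fintype α] [DecidableEq α] (σ : Perm α) {a x : α}
    (hne : a ≠ x) (h : σ.SameCycle a x) : ¬ (σ * swap a x).SameCycle a x := by
  classical
  have hex : ∃ k : ℕ, (σ ^ (k+1)) a = x := by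
    obtain ⟨k, hk, _, e⟩ := h.exists_pow_eq
    · exact ⟨k - 1, by rwa [Nat.sub_add_cancel hk]⟩
  obtain ⟨k, hk, hmin⟩ : ∃ k : ℕ, (σ ^ (k+1)) a = x ∧ ∀ j < k, (σ ^ (j+1)) a ≠ x :=
    ⟨Nat.find hex, Nat.find_spec hex, fun j hj => Nat.find_min hex hj⟩
  have hna : ∀ j ≤ k, (σ ^ (j+1)) a ≠ a := by
    intro j hj e
    rcases hj.eq_or_lt with rfl | hj
    · exact hne (e.symm.trans hk)
    · apply hmin (k - j - 1) (by omega)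
      rw [← hk]
      have : k + 1 = (k - j - 1 + 1) + (j + 1) := by omega
      rw [this, pow_add _ (k - j - 1 + 1) (j + 1), Perm.mul_apply, e]
  intro hs
  have key : ∀ n : ℕ, ∃ j ≤ k, ((σ * swap a x) ^ n) x = (σ ^ (j+1)) a := by
    intro n
    induction n with
    | zero => exact ⟨k, le_rfl, by simp [hk]⟩
    | succ n ih =>
      obtain ⟨j, hj, e⟩ := ih
      rw [pow_succ', Perm.mul_apply, e]
      rcases hj.eq_or_lt with rfl | hj'
      · exact ⟨0, by omega, by rw [hk]; simp⟩
      · refine ⟨j+1, by omega, ?_⟩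
        rw [Perm.mul_apply, swap_apply_of_ne_of_ne (hna j hj) (hmin j hj'), pow_succ' _ (j+1),
          Perm.mul_apply]
  obtain ⟨n, _, _, e⟩ := hs.symm.exists_pow_eq
  obtain ⟨j, hj, e'⟩ := key n
  exact hna j hj (e'.symm.trans e)

/-- Isolation of the set `{i | P i}`. -/
def Isol {α : Type*} (σ : Perm α) (P : α → Prop) : Prop :=
  ∀ i j, P i → P j → σ.SameCycle i j → i = j

lemma isol_merge {α : Type*} [DecidableEq α] (σ : Perm α) (P : α → Prop) (a x : α)
    (hx : ¬ P x) (ha : P a ∨ a = x) (h : Isol σ (fun i => P i ∨ i = x)) :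
    Isol (σ * swap a x) P := by
  classical
  intro i j hi hj hs
  let q : α → Quotient (SameCycle.setoid σ) := fun i => Quotient.mk _ i
  have hq : ∀ u v, q u = q v → σ.SameCycle u v := fun u v e => Quotient.exact e
  let f : α → Quotient (SameCycle.setoid σ) := fun i => if q i = q x then q a else q i
  have hσ : ∀ i, q (σ i) = q i := fun i => Quotient.sound (by
    show σ.SameCycle _ _
    rw [sameCycle_apply_left])
  have hf : ∀ i, f ((σ * swap a x) i) = f i := by
    intro i
    simp only [f, Perm.mul_apply, hσ]
    rcases eq_or_ne i a with rfl | ha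
    · rw [swap_apply_left]; simp
    rcases eq_or_ne i x with rfl | hx
    · rw [swap_apply_right]; simp
    rw [swap_apply_of_ne_of_ne ha hx]
  have hnx : ∀ i, P i → q i ≠ q x := fun i hi e =>
    hx (h i x (Or.inl hi) (Or.inr rfl) (hq _ _ e) ▸ hi)
  have := inv_of_sameCycle _ f hf hs
  simp only [f, if_neg (hnx i hi), if_neg (hnx j hj)] at this
  exact h i j (Or.inl hi) (Or.inl hj) (hq _ _ this)

lemma isol_split {α : Type*} [Fintype α] [DecidableEq α] (σ : Perm α) (P : α → Prop) (x : α)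
    (h : Isol σ P) :
    ∃ a, (P a ∨ a = x) ∧ Isol (σ * swap a x) (fun i => P i ∨ i = x) := by
  by_cases hx : P x
  · refine ⟨x, Or.inl hx, ?_⟩
    intro i j hi hj hs
    simp only [swap_self] at hs
    exact h i j (hi.elim id (· ▸ hx)) (hj.elim id (· ▸ hx)) hs
  by_cases he : ∃ a, P a ∧ σ.SameCycle a x
  · obtain ⟨a, ha, hs⟩ := he
    have hax : a ≠ x := fun e => hx (e ▸ ha)
    have hn := not_sameCycle_split σ hax hs
    have aux : ∀ i, P i → ¬ (σ * swap a x).SameCycle i x := by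
      intro i hi h1
      have h2 := sameCycle_of_split σ hs h1
      have := h i a hi ha (h2.trans hs.symm)
      subst this
      exact hn h1
    refine ⟨a, Or.inl ha, ?_⟩
    rintro i j (hi | rfl) (hj | rfl) h1
    · exact h i j hi hj (sameCycle_of_split σ hs h1)
    · exact absurd h1 (aux i hi)
    · exact absurd h1.symm (aux j hj)
    · rfl
  · push Not at he
    refine ⟨x, Or.inr rfl, ?_⟩
    rintro i j (hi | rfl) (hj | rfl) h1 <;> simp only [swap_self] at h1
    · exact h i j hi hj h1
    · exact absurd h1 (he i hi)
    · exact absurd h1.symm (he j hj)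
    · rfl

lemma isol_unique {α : Type*} [Fintype α] [DecidableEq α] (σ τ : Perm α) (P : α → Prop) (x : α)
    (hx : ¬ P x) (hσ : Isol σ (fun i => P i ∨ i = x)) (hτ : Isol τ (fun i => P i ∨ i = x))
    (a b : α) (ha : P a ∨ a = x) (hb : P b ∨ b = x) (e : σ * swap a x = τ * swap b x) :
    a = b := by
  have h1 : (σ * swap a x).SameCycle a x := by
    rcases eq_or_ne a x with rfl | hne
    · rfl
    · exact sameCycle_merge σ fun h => hne (hσ a x ha (Or.inr rfl) h)
  have h2 : (τ * swap b x).SameCycle b x := by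
    rcases eq_or_ne b x with rfl | hne
    · rfl
    · exact sameCycle_merge τ fun h => hne (hτ b x hb (Or.inr rfl) h)
  have h3 : (σ * swap a x).SameCycle a b := h1.trans (e ▸ h2.symm)
  rcases ha with ha | rfl
  · rcases hb with hb | rfl
    · exact isol_merge σ P a x hx (Or.inl ha) hσ a b ha hb h3
    · rw [e, swap_self] at h3
      exact hτ _ _ (Or.inl ha) (Or.inr rfl) h3
  · rw [swap_self] at h3
    exact hσ _ _ (Or.inr rfl) hb h3

/-- The intermediate set: fixed points are allowed inside `[m+1]`. -/
def XP (ℓ n m : ℕ) (π : ColoredPerm ℓ n) : Prop :=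
  (∀ i : Fin n, (i : ℕ) < m → π.1 i = 0) ∧
  (∀ i : Fin n, (π.2 i = i ∧ π.1 i = 0) → (i : ℕ) < m + 1) ∧
  (∀ i j : Fin n, (i : ℕ) < m → (j : ℕ) < m → π.2.SameCycle i j → i = j)

lemma isol_succ {n m : ℕ} (x : Fin n) (hx : (x : ℕ) = m) (σ : Perm (Fin n)) :
    Isol σ (fun i => (i : ℕ) < m ∨ i = x) ↔
    (∀ i j : Fin n, (i : ℕ) < m + 1 → (j : ℕ) < m + 1 → σ.SameCycle i j → i = j) := by
  have : ∀ i : Fin n, ((i : ℕ) < m ∨ i = x) ↔ (i : ℕ) < m + 1 := by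
    intro i; rw [Fin.ext_iff]; omega
  simp only [Isol, this]

/-- Forward map of the bijection. -/
def fwd (ℓ n : ℕ) (x : Fin n) (c : ZMod ℓ) (a : Fin n) (π : ColoredPerm ℓ n) :
    ColoredPerm ℓ n := (Function.update π.1 x c, π.2 * swap a x)

lemma swap_fix {n : ℕ} {σ : Perm (Fin n)} {a x i : Fin n} (ha : (a : ℕ) < x + 1)
    (hi : ¬ (i : ℕ) < x + 1) : (σ * swap a x) i = σ i := by
  rw [Perm.mul_apply, swap_apply_of_ne_of_ne]
  · rintro rfl; exact hi ha
  · rintro rfl; omega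

lemma card_X (ℓ n : ℕ) (x : Fin n) :
    Nat.card {π : ColoredPerm ℓ n // XP ℓ n x π} =
      ℓ * (x + 1) * Nat.card {π : ColoredPerm ℓ n // IsolatedFixed ℓ n (x + 1) π} := by
  have e1 : Nat.card {a : Fin n // (a : ℕ) < x + 1} = x + 1 := by
    rw [Nat.card_congr (Equiv.ofBijective
      (fun a : {a : Fin n // (a : ℕ) < x + 1} => (⟨a.1, a.2⟩ : Fin (x + 1))) ⟨?_, ?_⟩), Nat.card_fin]
    · intro a b h; simpa [Subtype.ext_iff, Fin.ext_iff] using h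
    · intro b; exact ⟨⟨⟨b, by omega⟩, b.2⟩, rfl⟩
  have hlt : ¬ ((x : ℕ) < x) := lt_irrefl _
  have hor : ∀ a : Fin n, (a : ℕ) < x + 1 → (a : ℕ) < x ∨ a = x := by
    intro i; rw [Fin.ext_iff]; omega
  symm
  have e2 : ℓ * (x + 1) * Nat.card {π : ColoredPerm ℓ n // IsolatedFixed ℓ n (x + 1) π} =
      Nat.card ((ZMod ℓ × {a : Fin n // (a : ℕ) < x + 1}) ×
        {π : ColoredPerm ℓ n // IsolatedFixed ℓ n (x + 1) π}) := by
    rw [Nat.card_prod, Nat.card_prod, e1, Nat.card_zmod]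
  rw [e2]
  refine Nat.card_congr (Equiv.ofBijective
    (fun t => ⟨fwd ℓ n x t.1.1 t.1.2.1 t.2.1, ?_, ?_, ?_⟩) ⟨?_, ?_⟩)
  · intro i hi
    have : i ≠ x := by rintro rfl; omega
    simp only [fwd, Function.update_of_ne this]
    exact t.2.2.1 i (by omega)
  · rintro i ⟨h1, h2⟩
    by_contra hi
    have hne : i ≠ x := by rintro rfl; omega
    simp only [fwd, Function.update_of_ne hne] at h2
    simp only [fwd, swap_fix t.1.2.2 hi] at h1
    exact hi (t.2.2.2.1 i ⟨h1, h2⟩)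
  · exact isol_merge t.2.1.2 (fun i => (i : ℕ) < x) t.1.2.1 x hlt (hor _ t.1.2.2)
      ((isol_succ x rfl _).2 t.2.2.2.2)
  · rintro ⟨⟨c, a, ha⟩, ⟨ε, σ⟩, h1, h2, h3⟩ ⟨⟨c', a', ha'⟩, ⟨ε', σ'⟩, h1', h2', h3'⟩ h
    simp only [fwd, Subtype.mk.injEq, Prod.mk.injEq] at h
    obtain ⟨he, hs⟩ := h
    have haa : a = a' := isol_unique σ σ' (fun i => (i : ℕ) < x) x hlt
      ((isol_succ x rfl _).2 h3) ((isol_succ x rfl _).2 h3') a a' (hor _ ha) (hor _ ha') hs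
    subst haa
    have hs' : σ = σ' := mul_right_cancel hs
    subst hs'
    have hc : c = c' := by simpa using congrFun he x
    subst hc
    have : ε = ε' := by
      funext i
      by_cases hi : i = x
      · subst hi
        exact (h1 i (by simp)).trans (h1' i (by simp)).symm
      · simpa [hi] using congrFun he i
    subst this
    rfl
  · rintro ⟨⟨ε, σ⟩, h1, h2, h3⟩
    obtain ⟨a, ha, hI⟩ := isol_split σ (fun i => (i : ℕ) < x) x h3
    have ha' : (a : ℕ) < x + 1 := by
      rcases ha with ha | rfl
      · exact Nat.lt_succ_of_lt ha
      · omega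
    refine ⟨⟨⟨ε x, a, ha'⟩, ⟨Function.update ε x 0, σ * swap a x⟩, ?_, ?_,
      (isol_succ x rfl _).1 hI⟩, ?_⟩
    · intro i hi
      by_cases hx : i = x
      · subst hx; simp
      · simp only [Function.update_of_ne hx]
        exact h1 i ((hor i hi).resolve_right hx)
    · rintro i ⟨h4, h5⟩
      by_contra hi
      have hne : i ≠ x := by rintro rfl; omega
      simp only [Function.update_of_ne hne] at h5
      simp only [swap_fix ha' hi] at h4
      exact hi (h2 i ⟨h4, h5⟩)
    · apply Subtype.ext
      simp [fwd, mul_assoc]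

lemma succAbove_lt {k : ℕ} (x : Fin (k + 1)) (i : Fin k) :
    ((x.succAbove i : Fin (k + 1)) : ℕ) < x ↔ (i : ℕ) < x := by
  rw [Fin.succAbove]
  split_ifs with h
  · simp
  · rw [Fin.lt_def] at h; simp at h ⊢; omega

lemma ext_succAbove {k : ℕ} (x : Fin (k + 1)) (σ : Perm (Fin k)) (i : Fin k) :
    (σ.extendDomain (finSuccAboveEquiv x)) (x.succAbove i) = x.succAbove (σ i) :=
  Perm.extendDomain_apply_image σ (finSuccAboveEquiv x) i

lemma ext_self {k : ℕ} (x : Fin (k + 1)) (σ : Perm (Fin k)) :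
    (σ.extendDomain (finSuccAboveEquiv x)) x = x :=
  Perm.extendDomain_apply_not_subtype σ (finSuccAboveEquiv x) (by simp)

lemma ext_sameCycle {k : ℕ} (x : Fin (k + 1)) (σ : Perm (Fin k)) (i j : Fin k) :
    (σ.extendDomain (finSuccAboveEquiv x)).SameCycle (x.succAbove i) (x.succAbove j) ↔
      σ.SameCycle i j :=
  sameCycle_extendDomain (f := finSuccAboveEquiv x)

lemma card_Y (ℓ k : ℕ) (x : Fin (k + 1)) :
    Nat.card {π : ColoredPerm ℓ k // IsolatedFixed ℓ k x π} =
    Nat.card {π : ColoredPerm ℓ (k + 1) // XP ℓ (k + 1) x π ∧ (π.2 x = x ∧ π.1 x = 0)} := by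
  refine Nat.card_congr (Equiv.ofBijective
    (fun t => ⟨(x.insertNth (α := fun _ => ZMod ℓ) 0 t.1.1, t.1.2.extendDomain (finSuccAboveEquiv x)),
      ⟨?_, ?_, ?_⟩, ?_, ?_⟩) ⟨?_, ?_⟩)
  · intro i hi
    induction i using x.succAboveCases with
    | x => simp
    | p i => simpa using t.2.1 i ((succAbove_lt x i).1 hi)
  · intro i
    induction i using x.succAboveCases with
    | x => simp
    | p i =>
      simp only [ext_succAbove, Fin.insertNth_apply_succAbove]
      rintro ⟨h1, h2⟩
      have := (succAbove_lt x i).2 (t.2.2.1 i ⟨Fin.succAbove_right_injective h1, h2⟩)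
      omega
  · intro i j hi hj
    induction i using x.succAboveCases with
    | x => omega
    | p i =>
      induction j using x.succAboveCases with
      | x => omega
      | p j =>
        simp only [ext_sameCycle]
        intro h
        rw [t.2.2.2 i j ((succAbove_lt x i).1 hi) ((succAbove_lt x j).1 hj) h]
  · simp only [ext_self]
  · simp
  · rintro ⟨⟨ε, σ⟩, h⟩ ⟨⟨ε', σ'⟩, h'⟩ e
    simp only [Subtype.mk.injEq, Prod.mk.injEq] at e ⊢
    obtain ⟨e1, e2⟩ := e
    constructor
    · funext i
      simpa using congrFun e1 (x.succAbove i)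
    · ext1 i
      have := congrArg (fun f : Perm (Fin (k + 1)) => f (x.succAbove i)) e2
      simp only [ext_succAbove] at this
      exact Fin.succAbove_right_injective this
  · rintro ⟨⟨ε, σ⟩, ⟨h1, h2, h3⟩, hx, hε⟩
    simp only at h1 h2 h3 hx hε
    have hp : ∀ y, σ y ≠ x ↔ y ≠ x := fun y => by
      rw [not_iff_not]
      conv_lhs => rw [← hx]
      exact σ.injective.eq_iff
    let τ : Perm (Fin k) :=
      ((finSuccAboveEquiv x).trans (σ.subtypePerm hp)).trans (finSuccAboveEquiv x).symm
    have hτ : ∀ i, x.succAbove (τ i) = σ (x.succAbove i) := by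
      intro i
      have : (finSuccAboveEquiv x) (τ i) = σ.subtypePerm hp (finSuccAboveEquiv x i) := by
        simp [τ]
      exact congrArg Subtype.val this
    have hext : τ.extendDomain (finSuccAboveEquiv x) = σ := by
      ext1 i
      induction i using x.succAboveCases with
      | x => rw [ext_self, hx]
      | p i => rw [ext_succAbove, hτ]
    refine ⟨⟨(fun i => ε (x.succAbove i), τ), ?_, ?_, ?_⟩, ?_⟩
    · intro i hi
      exact h1 _ ((succAbove_lt x i).2 hi)
    · rintro i ⟨h4, h5⟩
      simp only at h4 h5
      have := h2 (x.succAbove i) ⟨by rw [← hτ, h4], h5⟩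
      have hne : ((x.succAbove i : Fin (k + 1)) : ℕ) ≠ x := fun e => x.succAbove_ne i (Fin.ext e)
      exact (succAbove_lt x i).1 (by omega)
    · intro i j hi hj h
      apply Fin.succAbove_right_injective (p := x)
      apply h3 _ _ ((succAbove_lt x i).2 hi) ((succAbove_lt x j).2 hj)
      rw [← hext, ext_sameCycle]; exact h
    · apply Subtype.ext
      simp only [hext, Prod.mk.injEq, and_true]
      funext i
      induction i using x.succAboveCases with
      | x => simp [hε]
      | p i => simp

lemma card_split (ℓ k : ℕ) [NeZero ℓ] (x : Fin (k + 1)) :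
    Nat.card {π : ColoredPerm ℓ (k + 1) // XP ℓ (k + 1) x π} =
    Nat.card {π : ColoredPerm ℓ (k + 1) // XP ℓ (k + 1) x π ∧ (π.2 x = x ∧ π.1 x = 0)} +
    Nat.card {π : ColoredPerm ℓ (k + 1) // IsolatedFixed ℓ (k + 1) x π} := by
  classical
  have h : ∀ π : ColoredPerm ℓ (k + 1), IsolatedFixed ℓ (k + 1) x π ↔
      XP ℓ (k + 1) x π ∧ ¬ (π.2 x = x ∧ π.1 x = 0) := by
    intro π
    constructor
    · rintro ⟨h1, h2, h3⟩
      exact ⟨⟨h1, fun i hi => Nat.lt_succ_of_lt (h2 i hi), h3⟩, fun hx => lt_irrefl _ (h2 x hx)⟩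
    · rintro ⟨⟨h1, h2, h3⟩, hx⟩
      refine ⟨h1, fun i hi => ?_, h3⟩
      have hne : (i : ℕ) ≠ x := fun e => hx (Fin.ext e ▸ hi)
      have := h2 i hi
      omega
  simp only [h]
  simp only [Nat.card_eq_fintype_card, Fintype.card_subtype]
  rw [← Finset.card_filter_add_card_filter_not
    (s := Finset.univ.filter (fun π : ColoredPerm ℓ (k + 1) => XP ℓ (k + 1) x π))
    (fun π => π.2 x = x ∧ π.1 x = 0), Finset.filter_filter, Finset.filter_filter]

lemma card_diag_s12 (ℓ n : ℕ) : Nat.card {π : ColoredPerm ℓ n // IsolatedFixed ℓ n n π} = 1 := by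
  rw [Nat.card_eq_one_iff_unique]
  refine ⟨⟨?_⟩, ⟨⟨(0, 1), fun _ _ => rfl, fun i _ => i.2, ?_⟩⟩⟩
  · rintro ⟨⟨ε, σ⟩, h1, h2, h3⟩ ⟨⟨ε', σ'⟩, h1', h2', h3'⟩
    refine Subtype.ext (Prod.ext ?_ ?_)
    · funext i; exact (h1 i i.2).trans (h1' i i.2).symm
    · show σ = σ'
      ext1 i
      rw [← h3 i (σ i) i.2 (σ i).2 ⟨1, by simp⟩, ← h3' i (σ' i) i.2 (σ' i).2 ⟨1, by simp⟩]
  · intro i j _ _ h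
    simpa using h

theorem stmt_12 (ℓ : ℕ) (hℓ : 1 ≤ ℓ) (d : ℕ → ℕ → ℤ)
    (hd_diag : ∀ n : ℕ, d n n = 1)
    (hd_rec : ∀ n m : ℕ, m < n →
      d n m = (ℓ : ℤ) * ((m : ℤ) + 1) * d n (m + 1) - d (n - 1) m)
    (m n : ℕ) (hmn : m ≤ n) :
    d n m = Nat.card {π : ColoredPerm ℓ n // IsolatedFixed ℓ n m π} := by
  have : NeZero ℓ := ⟨by omega⟩
  obtain ⟨r, rfl⟩ := Nat.exists_eq_add_of_le hmn
  clear hmn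
  induction r generalizing m with
  | zero => rw [Nat.add_zero, hd_diag, card_diag_s12]; rfl
  | succ r ih =>
    have h1 := ih (m + 1)
    have h2 := ih m
    rw [show m + 1 + r = m + r + 1 by ring] at h1
    have hr := hd_rec (m + r + 1) m (by omega)
    rw [← add_assoc, hr, Nat.add_sub_cancel, h1, h2]
    let x : Fin (m + r + 1) := ⟨m, by omega⟩
    have hX := card_X ℓ (m + r + 1) x
    rw [card_split, ← card_Y] at hX
    simp only [x] at hX
    zify at hX
    linarith
end

section
/- Let ℓ ≥ 1 and n ≥ 0. Then the ℓ-derangement number satisfies d_{ℓ,n}^0 = g_{ℓ,n}^0 = Σ_{i=0}^{n} (−1)^i · (n!/i!) · ℓ^{n−i}. -/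
/-- for `ℓ ≥ 1` and `n ≥ 0`, the ℓ-derangement number satisfies
`d_{ℓ,n}^0 = g_{ℓ,n}^0 = Σ_{i=0}^{n} (−1)^i · (n!/i!) · ℓ^{n−i}`.  Here `g` is Euler's
difference table and `d` the allied array. -/
theorem stmt_13 (ℓ : ℕ) (hℓ : 1 ≤ ℓ) (g d : ℕ → ℕ → ℤ)
    (hg_diag : ∀ n : ℕ, g n n = (ℓ : ℤ) ^ n * (Nat.factorial n : ℤ))
    (hg_rec : ∀ n m : ℕ, m < n → g n m = g n (m + 1) - g (n - 1) m)
    (hd_diag : ∀ n : ℕ, d n n = 1)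
    (hd_rec : ∀ n m : ℕ, m < n →
      d n m = (ℓ : ℤ) * ((m : ℤ) + 1) * d n (m + 1) - d (n - 1) m)
    (n : ℕ) :
    d n 0 = g n 0 ∧
      g n 0 = ∑ i ∈ Finset.range (n + 1),
        (-1 : ℤ) ^ i * ((Nat.factorial n / Nat.factorial i : ℕ) : ℤ) * (ℓ : ℤ) ^ (n - i) := by
  have key : ∀ k m : ℕ, g (m + k) m = (ℓ : ℤ) ^ m * (Nat.factorial m : ℤ) * d (m + k) m := by
    intro k
    induction k with
    | zero => intro m; simp [hg_diag, hd_diag]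
    | succ k ih =>
      intro m
      have h1 := ih (m + 1)
      have h2 := ih m
      rw [hg_rec _ _ (by omega), hd_rec _ _ (by omega)]
      have e1 : m + (k + 1) - 1 = m + k := by omega
      have e2 : m + 1 + k = m + (k + 1) := by omega
      rw [e2] at h1
      rw [e1, h1, h2, Nat.factorial_succ]
      push_cast
      ring
  have key2 : ∀ k m : ℕ,
      g (m + k) m = (fwdDiff 1)^[k] (fun j : ℕ => (ℓ : ℤ) ^ j * (Nat.factorial j : ℤ)) m := by
    intro k
    induction k with
    | zero => intro m; simp [hg_diag]
    | succ k ih =>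
      intro m
      have h1 := ih (m + 1)
      have h2 := ih m
      rw [hg_rec _ _ (by omega)]
      have e1 : m + (k + 1) - 1 = m + k := by omega
      have e2 : m + 1 + k = m + (k + 1) := by omega
      rw [e2] at h1
      rw [e1, h1, h2, Function.iterate_succ_apply', fwdDiff]
  constructor
  · have h := key n 0
    simp at h
    exact h.symm
  · have h := key2 n 0
    rw [fwdDiff_iter_eq_sum_shift, zero_add] at h
    rw [h, ← Finset.sum_range_reflect]
    apply Finset.sum_congr rfl
    intro i hi
    have hi' : i ≤ n := by
      have := Finset.mem_range.mp hi
      omega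
    have e1 : n + 1 - 1 - i = n - i := by omega
    have e2 : n - (n - i) = i := by omega
    have e3 : Nat.factorial n / Nat.factorial i = n.choose i * Nat.factorial (n - i) := by
      apply Nat.div_eq_of_eq_mul_left (Nat.factorial_pos i)
      rw [← Nat.choose_mul_factorial_mul_factorial hi']
      ring
    rw [e1, e2, e3, Nat.choose_symm hi']
    simp only [smul_eq_mul, mul_one, zero_add]
    push_cast
    ring
end

section
/- Let ℓ ≥ 1 and n ≥ 1. Then d_{ℓ,n}^0 = ℓ·n·d_{ℓ,n−1}^0 + (−1)^n. -/
/-- for `ℓ ≥ 1` and `n ≥ 1`, `d_{ℓ,n}^0 = ℓ·n·d_{ℓ,n−1}^0 + (−1)^n`,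
where `d` is the allied array (`d n n = 1`, `d n m = ℓ(m+1) d n (m+1) − d (n−1) m`). -/
theorem stmt_14 (ℓ : ℕ) (hℓ : 1 ≤ ℓ) (d : ℕ → ℕ → ℤ)
    (hd_diag : ∀ n : ℕ, d n n = 1)
    (hd_rec : ∀ n m : ℕ, m < n →
      d n m = (ℓ : ℤ) * ((m : ℤ) + 1) * d n (m + 1) - d (n - 1) m)
    (n : ℕ) (hn : 1 ≤ n) :
    d n 0 = (ℓ : ℤ) * (n : ℤ) * d (n - 1) 0 + (-1 : ℤ) ^ n := by
  have hf : ∀ k m : ℕ, d (m + (k + 1)) m =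
      (ℓ : ℤ) * ((m : ℤ) + 1) * d (m + 1 + k) (m + 1) - d (m + k) m := by
    intro k m
    have h := hd_rec (m + (k + 1)) m (by omega)
    rw [show m + (k + 1) - 1 = m + k by omega] at h
    rw [show m + 1 + k = m + (k + 1) by omega]
    exact h
  have hz : ∀ m : ℕ, d (m + 0) m = 1 := fun m => hd_diag m
  obtain ⟨f, hfd⟩ : ∃ f : ℕ → ℕ → ℤ, ∀ k m, f k m = d (m + k) m := ⟨_, fun _ _ => rfl⟩
  simp only [← hfd] at hf hz
  have key : ∀ k m : ℕ, f (k + 2) m =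
      ((ℓ : ℤ) * (m + k + 2) - 1) * f (k + 1) m + ℓ * (k + 1) * f k m := by
    intro k
    induction k with
    | zero =>
      intro m
      have h1 := hf 1 m
      have h2 := hf 0 m
      have h3 := hf 0 (m + 1)
      simp only [zero_add, hz] at h1 h2 h3 ⊢
      rw [show (0 + 2 : ℕ) = 1 + 1 from rfl] at *
      rw [h1, h3, h2]
      push_cast
      ring
    | succ k ih =>
      intro m
      have h1 := hf (k + 2) m
      have h2 := hf (k + 1) m
      have h3 := hf k m
      have h4 := ih (m + 1)
      have h5 := ih m
      push_cast at *
      simp only [add_assoc] at *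
      norm_num at *
      linear_combination h1 + (ℓ : ℤ) * (m + 1) * h4 - ((ℓ : ℤ) * (m + k + 3) - 1) * h2
        - (ℓ : ℤ) * (k + 1) * h3 - h5
  have main : ∀ k : ℕ, f (k + 1) 0 = (ℓ : ℤ) * (k + 1) * f k 0 + (-1) ^ (k + 1) := by
    intro k
    induction k with
    | zero =>
      have h := hf 0 0
      simp only [zero_add, hz] at h ⊢
      rw [h]
      push_cast
      ring
    | succ k ih =>
      have h := key k 0
      push_cast at *
      rw [show k + 1 + 1 = k + 2 from rfl, pow_succ]
      linear_combination h - ih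
  obtain ⟨k, rfl⟩ : ∃ k, n = k + 1 := ⟨n - 1, by omega⟩
  have h := main k
  simp only [hfd, zero_add] at h
  simpa using h
end

section
/- Let ℓ ≥ 1 and m, n ≥ 0. Then g_{ℓ,n+m}^m = Σ_{i=0}^{n} (−1)^{n−i} · C(n,i) · ℓ^{m+i} · (m+i)!, where C(n,i) is a binomial coefficient. -/
/-- for `ℓ ≥ 1` and `m, n ≥ 0`,
`g_{ℓ,n+m}^m = Σ_{i=0}^{n} (−1)^{n−i} · C(n,i) · ℓ^{m+i} · (m+i)!`,
where `g` is Euler's difference table. -/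
theorem stmt_15 (ℓ : ℕ) (hℓ : 1 ≤ ℓ) (g : ℕ → ℕ → ℤ)
    (hg_diag : ∀ n : ℕ, g n n = (ℓ : ℤ) ^ n * (Nat.factorial n : ℤ))
    (hg_rec : ∀ n m : ℕ, m < n → g n m = g n (m + 1) - g (n - 1) m)
    (m n : ℕ) :
    g (n + m) m = ∑ i ∈ Finset.range (n + 1),
      (-1 : ℤ) ^ (n - i) * (n.choose i : ℤ) * (ℓ : ℤ) ^ (m + i) *
        (Nat.factorial (m + i) : ℤ) := by
  have key : ∀ n m : ℕ, g (n + m) m =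
      (fwdDiff (1 : ℕ))^[n] (fun k : ℕ => (ℓ : ℤ) ^ k * (Nat.factorial k : ℤ)) m := by
    intro n
    induction n with
    | zero => intro m; simpa using hg_diag m
    | succ n ih =>
      intro m
      rw [Function.iterate_succ_apply', fwdDiff, ← ih, ← ih, hg_rec (n + 1 + m) m (by omega)]
      have h1 : n + 1 + m = n + (m + 1) := by omega
      have h2 : n + (m + 1) - 1 = n + m := by omega
      rw [h1, h2]
  rw [key, fwdDiff_iter_eq_sum_shift]
  refine Finset.sum_congr rfl fun i _ => ?_
  simp only [smul_eq_mul, mul_one]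
  ring
end

section
/- Let ℓ ≥ 1. The array g_{ℓ,n}^m satisfies the following recurrences: (a) g_{ℓ,n}^m = (ℓn − 1)·g_{ℓ,n−1}^m + ℓ(n − m − 1)·g_{ℓ,n−2}^m for n ≥ 2 and 0 ≤ m ≤ n − 2; (b) g_{ℓ,n}^m = ℓ(n − m)·g_{ℓ,n−1}^m + ℓm·g_{ℓ,n−1}^{m−1} for 1 ≤ m ≤ n − 1; (c) g_{ℓ,n}^m = ℓn·g_{ℓ,n−1}^m − ℓm·g_{ℓ,n−2}^{m−1} for n ≥ 2 and 1 ≤ m ≤ n − 1. -/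
/-- recurrences for Euler's difference table `g_{ℓ,n}^m`
(`g n n = ℓ^n n!`, `g n m = g n (m+1) − g (n−1) m`):
(a) `g_{ℓ,n}^m = (ℓn − 1)·g_{ℓ,n−1}^m + ℓ(n − m − 1)·g_{ℓ,n−2}^m` for `n ≥ 2`, `0 ≤ m ≤ n − 2`;
(b) `g_{ℓ,n}^m = ℓ(n − m)·g_{ℓ,n−1}^m + ℓm·g_{ℓ,n−1}^{m−1}` for `1 ≤ m ≤ n − 1`;
(c) `g_{ℓ,n}^m = ℓn·g_{ℓ,n−1}^m − ℓm·g_{ℓ,n−2}^{m−1}` for `n ≥ 2`, `1 ≤ m ≤ n − 1`. -/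
theorem stmt_17 (ℓ : ℕ) (hℓ : 1 ≤ ℓ) (g : ℕ → ℕ → ℤ)
    (hg_diag : ∀ n : ℕ, g n n = (ℓ : ℤ) ^ n * (Nat.factorial n : ℤ))
    (hg_rec : ∀ n m : ℕ, m < n → g n m = g n (m + 1) - g (n - 1) m) :
    (∀ n m : ℕ, 2 ≤ n → m ≤ n - 2 →
      g n m = ((ℓ : ℤ) * (n : ℤ) - 1) * g (n - 1) m +
        (ℓ : ℤ) * ((n : ℤ) - (m : ℤ) - 1) * g (n - 2) m) ∧
    (∀ n m : ℕ, 1 ≤ m → m ≤ n - 1 →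
      g n m = (ℓ : ℤ) * ((n : ℤ) - (m : ℤ)) * g (n - 1) m +
        (ℓ : ℤ) * (m : ℤ) * g (n - 1) (m - 1)) ∧
    (∀ n m : ℕ, 2 ≤ n → 1 ≤ m → m ≤ n - 1 →
      g n m = (ℓ : ℤ) * (n : ℤ) * g (n - 1) m -
        (ℓ : ℤ) * (m : ℤ) * g (n - 2) (m - 1)) := by
  have hrec : ∀ k m : ℕ, g (m + k + 1) m = g (m + k + 1) (m + 1) - g (m + k) m := by
    intro k m
    have h := hg_rec (m + k + 1) m (by omega)
    simpa using h
  have h0 : ∀ m : ℕ, g (m + 1) (m + 1) = (ℓ : ℤ) * ((m : ℤ) + 1) * g m m := by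
    intro m
    rw [hg_diag, hg_diag, Nat.factorial_succ]
    push_cast
    ring
  have hB : ∀ k m : ℕ, g (m + k + 2) (m + 1) = (ℓ : ℤ) * ((k : ℤ) + 1) * g (m + k + 1) (m + 1)
      + (ℓ : ℤ) * ((m : ℤ) + 1) * g (m + k + 1) m := by
    intro k
    induction k with
    | zero =>
      intro m
      have h1 := hrec 0 (m + 1)
      have h2 := hrec 0 m
      have h3 := h0 m
      have h4 := h0 (m + 1)
      simp only [add_zero, Nat.cast_zero] at *
      rw [show m + 1 + 1 = m + 2 from rfl] at *
      push_cast at h4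
      linear_combination h1 + h4 - (ℓ : ℤ) * ((m : ℤ) + 1) * h2 - h3
    | succ k ih =>
      intro m
      have h1 := hrec (k + 1) (m + 1)
      have h2 := hrec (k + 1) m
      have h3 := ih m
      have h4 := ih (m + 1)
      have h5 := hrec k (m + 1)
      rw [show m + 1 + (k + 1) + 1 = m + k + 3 by ring, show m + 1 + (k + 1) = m + k + 2 by ring] at h1
      rw [show m + (k + 1) + 1 = m + k + 2 by ring, show m + (k + 1) = m + k + 1 by ring] at h2
      rw [show m + 1 + k + 2 = m + k + 3 by ring, show m + 1 + k + 1 = m + k + 2 by ring] at h4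
      rw [show m + 1 + k + 1 = m + k + 2 by ring, show m + 1 + k = m + k + 1 by ring] at h5
      rw [show m + (k + 1) + 2 = m + k + 3 by ring, show m + (k + 1) + 1 = m + k + 2 by ring]
      push_cast at h4 ⊢
      linear_combination h1 + h4 - h3 - (ℓ : ℤ) * ((m : ℤ) + 1) * h2
        - (ℓ : ℤ) * ((k : ℤ) + 1) * h5
  refine ⟨?_, ?_, ?_⟩
  · intro n m hn hm
    obtain ⟨k, rfl⟩ : ∃ k, n = m + k + 2 := ⟨n - 2 - m, by omega⟩
    rw [show m + k + 2 - 1 = m + k + 1 by omega, show m + k + 2 - 2 = m + k by omega]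
    have h1 := hrec (k + 1) m
    have h2 := hB k m
    have h3 := hrec k m
    rw [show m + (k + 1) + 1 = m + k + 2 by ring, show m + (k + 1) = m + k + 1 by ring] at h1
    push_cast
    linear_combination h1 + h2 - (ℓ : ℤ) * ((k : ℤ) + 1) * h3
  · intro n m hm hmn
    obtain ⟨m, rfl⟩ : ∃ m', m = m' + 1 := ⟨m - 1, by omega⟩
    obtain ⟨k, rfl⟩ : ∃ k, n = m + k + 2 := ⟨n - 2 - m, by omega⟩
    rw [show m + k + 2 - 1 = m + k + 1 by omega, show m + 1 - 1 = m by omega]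
    have h2 := hB k m
    push_cast
    linear_combination h2
  · intro n m hn hm hmn
    obtain ⟨m, rfl⟩ : ∃ m', m = m' + 1 := ⟨m - 1, by omega⟩
    obtain ⟨k, rfl⟩ : ∃ k, n = m + k + 2 := ⟨n - 2 - m, by omega⟩
    rw [show m + k + 2 - 1 = m + k + 1 by omega, show m + 1 - 1 = m by omega,
      show m + k + 2 - 2 = m + k by omega]
    have h2 := hB k m
    have h3 := hrec k m
    push_cast
    linear_combination h2 + (ℓ : ℤ) * ((m : ℤ) + 1) * h3
end

section
/- Let ℓ ≥ 1. The array d_{ℓ,n}^m satisfies the following recurrences: (a) d_{ℓ,n}^m = (ℓn − 1)·d_{ℓ,n−1}^m + ℓ(n − m − 1)·d_{ℓ,n−2}^m for n ≥ 2 and 0 ≤ m ≤ n − 2; (b) d_{ℓ,n}^m = ℓ(n − m)·d_{ℓ,n−1}^m + d_{ℓ,n−1}^{m−1} for 1 ≤ m ≤ n − 1; (c) d_{ℓ,n}^m + d_{ℓ,n−2}^{m−1} = ℓn·d_{ℓ,n−1}^m for n ≥ 2 and 1 ≤ m ≤ n − 1. -/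
/-- recurrences for the allied array `d_{ℓ,n}^m`
(`d n n = 1`, `d n m = ℓ(m+1) d n (m+1) − d (n−1) m`):
(a) `d_{ℓ,n}^m = (ℓn − 1)·d_{ℓ,n−1}^m + ℓ(n − m − 1)·d_{ℓ,n−2}^m` for `n ≥ 2`, `0 ≤ m ≤ n − 2`;
(b) `d_{ℓ,n}^m = ℓ(n − m)·d_{ℓ,n−1}^m + d_{ℓ,n−1}^{m−1}` for `1 ≤ m ≤ n − 1`;
(c) `d_{ℓ,n}^m + d_{ℓ,n−2}^{m−1} = ℓn·d_{ℓ,n−1}^m` for `n ≥ 2`, `1 ≤ m ≤ n − 1`. -/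
theorem stmt_18 (ℓ : ℕ) (hℓ : 1 ≤ ℓ) (d : ℕ → ℕ → ℤ)
    (hd_diag : ∀ n : ℕ, d n n = 1)
    (hd_rec : ∀ n m : ℕ, m < n →
      d n m = (ℓ : ℤ) * ((m : ℤ) + 1) * d n (m + 1) - d (n - 1) m) :
    (∀ n m : ℕ, 2 ≤ n → m ≤ n - 2 →
      d n m = ((ℓ : ℤ) * (n : ℤ) - 1) * d (n - 1) m +
        (ℓ : ℤ) * ((n : ℤ) - (m : ℤ) - 1) * d (n - 2) m) ∧
    (∀ n m : ℕ, 1 ≤ m → m ≤ n - 1 →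
      d n m = (ℓ : ℤ) * ((n : ℤ) - (m : ℤ)) * d (n - 1) m + d (n - 1) (m - 1)) ∧
    (∀ n m : ℕ, 2 ≤ n → 1 ≤ m → m ≤ n - 1 →
      d n m + d (n - 2) (m - 1) = (ℓ : ℤ) * (n : ℤ) * d (n - 1) m) := by
  have rec1 : ∀ n m : ℕ, m ≤ n →
      d (n + 1) m = (ℓ : ℤ) * ((m : ℤ) + 1) * d (n + 1) (m + 1) - d n m := by
    intro n m h
    exact hd_rec (n + 1) m (by omega)
  have C : ∀ k n m : ℕ, n = m + k →
      d (n + 2) (m + 1) + d n m = (ℓ : ℤ) * ((n : ℤ) + 2) * d (n + 1) (m + 1) := by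
    intro k
    induction k with
    | zero =>
      intro n m h
      obtain rfl : n = m := by omega
      have h1 := rec1 (n + 1) (n + 1) le_rfl
      rw [hd_diag, hd_diag] at h1
      rw [hd_diag, hd_diag, h1]
      push_cast
      ring
    | succ k ih =>
      intro n m h
      obtain ⟨p, rfl⟩ : ∃ p, n = p + 1 := ⟨m + k, by omega⟩
      have h1 := rec1 (p + 2) (m + 1) (by omega)
      have h2 := rec1 p m (by omega)
      have h3 := rec1 (p + 1) (m + 1) (by omega)
      have c1 := ih p m (by omega)
      have c2 := ih (p + 1) (m + 1) (by omega)
      simp only [add_assoc, Nat.reduceAdd] at *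
      push_cast at *
      linear_combination h1 + h2 - (ℓ : ℤ) * (p + 3) * h3 + (ℓ : ℤ) * (m + 2) * c2 - c1
  refine ⟨?_, ?_, ?_⟩
  · intro n m hn hm
    obtain ⟨p, rfl⟩ : ∃ p, n = p + 2 := ⟨n - 2, by omega⟩
    have hm' : m ≤ p := by omega
    have h1 := rec1 (p + 1) m (by omega)
    have h2 := rec1 p m hm'
    have c := C (p - m) p m (by omega)
    simp only [add_assoc, Nat.reduceAdd] at h1
    rw [show p + 2 - 1 = p + 1 by omega, show p + 2 - 2 = p by omega]
    push_cast
    linear_combination h1 + (ℓ : ℤ) * (m + 1) * c - (ℓ : ℤ) * (p + 2) * h2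
  · intro n m h1m hm
    obtain ⟨p, rfl⟩ : ∃ p, n = p + 2 := ⟨n - 2, by omega⟩
    obtain ⟨q, rfl⟩ : ∃ q, m = q + 1 := ⟨m - 1, by omega⟩
    have h2 := rec1 p q (by omega)
    have c := C (p - q) p q (by omega)
    rw [show p + 2 - 1 = p + 1 by omega, show q + 1 - 1 = q by omega]
    push_cast
    linear_combination c - h2
  · intro n m hn h1m hm
    obtain ⟨p, rfl⟩ : ∃ p, n = p + 2 := ⟨n - 2, by omega⟩
    obtain ⟨q, rfl⟩ : ∃ q, m = q + 1 := ⟨m - 1, by omega⟩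
    have c := C (p - q) p q (by omega)
    rw [show p + 2 - 1 = p + 1 by omega, show q + 1 - 1 = q by omega,
      show p + 2 - 2 = p by omega]
    push_cast
    linear_combination c
end
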